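/- arXiv:2303.10665 — 2 statements merged into one kernel-verified Lean document; each statement's English description precedes it below -/
import Mathlib

section
/- (Propagation of chaos for deterministic MFC.) Let 𝒳, 𝒰 be compact metric spaces, p(·|x,u,μ) a continuous transition kernel, and Π an equi-Lipschitz class of policies: there is L_Π > 0 such that π_t(·|x,μ) ∈ 𝒫(𝒰) is L_Π-Lipschitz in (x,μ) for all t and π ∈ Π. Consider the N-agent system with i.i.d. initial states x_0^{i,N} ∼ μ_0, actions u_t^{i,N} ∼ π_t(·|x_t^{i,N}, μ_t^N), transitions x_{t+1}^{i,N} ∼ p(·|x_t^{i,N}, u_t^{i,N}, μ_t^N), where μ_t^N := (1/N) Σ_i δ_{x_t^{i,N}}; and the deterministic limit MF μ_{t+1} = ∬ p(·|x,u,μ_t) π_t(du|x,μ_t) μ_t(dx) with μ_0 given. Then for any family ℱ ⊆ ℝ^{𝒫(𝒳)} of equicontinuous functions, at every time t ∈ ℕ: sup_{π ∈ Π} sup_{f ∈ ℱ} | E[f(μ_t^N)] − f(μ_t) | → 0 as N → ∞. -/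
open MeasureTheory

/-- `W₁` distance on probability measures, via Kantorovich duality. -/
noncomputable def W1 {X : Type*} [MeasurableSpace X] [PseudoMetricSpace X]
    (μ ν : ProbabilityMeasure X) : ℝ :=
  ⨆ f : {f : X → ℝ // LipschitzWith 1 f},
    |∫ x, (f : X → ℝ) x ∂(μ : Measure X) - ∫ x, (f : X → ℝ) x ∂(ν : Measure X)|

/-- Empirical measure of `N` points (an arbitrary probability measure if `N = 0`). -/
noncomputable def emp {X : Type*} [MeasurableSpace X] [Nonempty X] (N : ℕ) (x : Fin N → X) :
    ProbabilityMeasure X := by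
  classical
  exact if hN : N = 0 then ⟨Measure.dirac (Classical.arbitrary X), inferInstance⟩
  else ⟨(N : ENNReal)⁻¹ • ∑ i : Fin N, Measure.dirac (x i), by
    constructor
    simp only [Measure.smul_apply, Measure.coe_finset_sum, Finset.sum_apply,
      Measure.dirac_apply' _ MeasurableSet.univ, smul_eq_mul]
    simp only [Set.indicator_univ, Pi.one_apply, Finset.sum_const, Finset.card_univ,
      Fintype.card_fin, nsmul_eq_mul, mul_one]
    exact ENNReal.inv_mul_cancel (by exact_mod_cast hN) (by simp)⟩

/-- Law of the `N`-agent deterministic-MFC system at each time: agents start i.i.d. `μ0`,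
sample actions from the shared policy `π` given own state and the empirical mean field, and
transition through the kernel `p`. -/
noncomputable def mfcLawN {X U : Type*} [MeasurableSpace X] [Nonempty X] [MeasurableSpace U]
    (p : X → U → ProbabilityMeasure X → ProbabilityMeasure X)
    (π : ℕ → X → ProbabilityMeasure X → ProbabilityMeasure U)
    (μ0 : ProbabilityMeasure X) (N : ℕ) : ℕ → Measure (Fin N → X)
  | 0 => Measure.pi fun _ => (μ0 : Measure X)
  | t + 1 => (mfcLawN p π μ0 N t).bind fun x =>
      Measure.pi fun i => ((π t (x i) (emp N x) : Measure U)).bind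
        fun u => (p (x i) u (emp N x) : Measure X)

/-!
An equicontinuous class of policies is relatively compact by Arzelà–Ascoli, and one step of the
mean field dynamics is jointly continuous in the policy and the mean field, so the steps under the
policies of the class share a modulus of continuity for `W₁`. The expectation of a nonlinear modulus
is awkward to propagate, but `𝒫(𝒳)` is convex and its straight lines have length `W₁`: cutting such
a line into short pieces upgrades the modulus to a bound `ε + C W₁` for every `ε`.

Conditionally on the current states, the next states of the agents are independent and their laws
average to the mean field step applied to the empirical measure. The `1`-Lipschitz functions are,
up to constants, totally bounded, so the `L¹` law of large numbers for finitely many of them makes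
the expected `W₁` distance to that average small, uniformly in the states and the policy. Together
with the bound `ε + C W₁`, induction on time gives `E W₁(μ_t^N, μ_t) → 0` uniformly in the policy,
and applying the same bound to an equicontinuous family of functions finishes the proof.
-/

namespace MeanField

open Filter Topology ProbabilityTheory
open scoped NNReal unitInterval

section Integration

variable {Y : Type*} [TopologicalSpace Y] [CompactSpace Y] [MeasurableSpace Y]
  [OpensMeasurableSpace Y]

lemma integrable_of_continuous (m : Measure Y) [IsFiniteMeasure m] {g : Y → ℝ}
    (hg : Continuous g) : Integrable g m :=
  hg.integrable_of_hasCompactSupport (.of_compactSpace g)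

lemma dist_integral_le_dist (m : ProbabilityMeasure Y) (g h : C(Y, ℝ)) :
    dist (∫ y, g y ∂(m : Measure Y)) (∫ y, h y ∂(m : Measure Y)) ≤ dist g h := by
  rw [dist_eq_norm, ← integral_sub (integrable_of_continuous _ g.continuous)
    (integrable_of_continuous _ h.continuous)]
  simpa using norm_integral_le_of_norm_le_const (μ := (m : Measure Y)) (f := fun y => g y - h y)
    (ae_of_all _ fun y => (dist_eq_norm (g y) (h y)).symm.trans_le (g.dist_apply_le_dist y))

lemma continuous_integral_prod :
    Continuous fun z : C(Y, ℝ) × ProbabilityMeasure Y => ∫ y, z.1 y ∂(z.2 : Measure Y) :=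
  continuous_prod_of_continuous_lipschitzWith _ 1
    ProbabilityMeasure.continuous_integral_continuousMap
    fun m => LipschitzWith.of_dist_le_mul fun g h => by
      simpa using dist_integral_le_dist m g h

end Integration

section Mixtures

variable {Y Z : Type*} [TopologicalSpace Y] [MeasurableSpace Y] [OpensMeasurableSpace Y]
  [TopologicalSpace Z] [MeasurableSpace Z] [BorelSpace Z] [HasOuterApproxClosed Z]

lemma measurable_toMeasure_of_continuous {κ : Y → ProbabilityMeasure Z} (hκ : Continuous κ) :
    Measurable fun y => (κ y : Measure Z) := by
  refine Measurable.measure_of_isPiSystem_of_isProbabilityMeasure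
    (BorelSpace.measurable_eq.trans borel_eq_generateFrom_isClosed) isPiSystem_isClosed
    fun s hs => ?_
  refine measurable_of_tendsto_metrizable (f := fun n y => ∫⁻ z, hs.apprSeq n z ∂(κ y : Measure Z))
    (fun n => ?_) (tendsto_pi_nhds.2 fun y => HasOuterApproxClosed.tendsto_lintegral_apprSeq hs _)
  exact ((ProbabilityMeasure.continuous_lintegral_boundedContinuousFunction _).comp hκ).measurable

/-- The mixture `∫ κ_y dm(y)` of a continuous family of probability measures `κ`: the law of a
point drawn from `κ_y` when `y` is drawn from `m`. -/
noncomputable def mixture (κ : C(Y, ProbabilityMeasure Z)) (m : ProbabilityMeasure Y) :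
    ProbabilityMeasure Z :=
  ⟨(m : Measure Y).bind fun y => (κ y : Measure Z),
    isProbabilityMeasure_bind (measurable_toMeasure_of_continuous κ.continuous).aemeasurable
      (ae_of_all _ fun _ => inferInstance)⟩

lemma integral_mixture [CompactSpace Z] (κ : C(Y, ProbabilityMeasure Z))
    (m : ProbabilityMeasure Y) {g : Z → ℝ} (hg : Continuous g) :
    ∫ z, g z ∂(mixture κ m : Measure Z) = ∫ y, ∫ z, g z ∂(κ y : Measure Z) ∂(m : Measure Y) := by
  let K : Kernel Y Z :=
    ⟨fun y => (κ y : Measure Z), measurable_toMeasure_of_continuous κ.continuous⟩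
  have h := Kernel.integral_comp (η := K) (κ := Kernel.const Unit (m : Measure Y)) (a := ())
    (f := g)
  rw [Kernel.comp_apply] at h
  exact h (integrable_of_continuous (mixture κ m : Measure Z) hg)

lemma continuous_mixture [CompactSpace Y] [CompactSpace Z] :
    Continuous fun z : C(Y, ProbabilityMeasure Z) × ProbabilityMeasure Y => mixture z.1 z.2 := by
  refine ProbabilityMeasure.continuous_iff_forall_continuousMap_continuous_integral.2 fun g => ?_
  let integralAgainst : C(ProbabilityMeasure Z, ℝ) :=
    ⟨fun ν => ∫ z, g z ∂(ν : Measure Z), ProbabilityMeasure.continuous_integral_continuousMap g⟩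
  simp only [integral_mixture _ _ g.continuous]
  exact continuous_integral_prod.comp (f := fun z : C(Y, ProbabilityMeasure Z) × _ =>
    (integralAgainst.comp z.1, z.2)) (by fun_prop)

end Mixtures

section Equicontinuity

lemma isCompact_closure_of_equicontinuous {K β : Type*} [TopologicalSpace K] [CompactSpace K]
    [MetricSpace β] {s : Set β} (hs : IsCompact s) {S : Set C(K, β)}
    (hS : ∀ f ∈ S, ∀ x, f x ∈ s) (hequi : Equicontinuous fun f : S => (f : K → β)) :
    IsCompact (closure S) := by
  let e := (ContinuousMap.isometryEquivBoundedOfCompact K β).toHomeomorph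
  rw [← e.isCompact_image, e.image_closure]
  refine BoundedContinuousFunction.arzela_ascoli s hs _ ?_ ?_
  · rintro _ x ⟨f, hf, rfl⟩
    exact hS f hf x
  · exact hequi.comp fun f : e '' S => ⟨e.symm f, Set.mem_image_equiv.1 f.2⟩

lemma uniformEquicontinuous_of_isCompact {A E β : Type*} [PseudoMetricSpace A]
    [PseudoMetricSpace E] [CompactSpace E] [PseudoMetricSpace β] {S : Set A} (hS : IsCompact S)
    {T : A × E → β} (hT : Continuous T) : UniformEquicontinuous fun (a : S) x => T (a, x) := by
  have huc := (hS.prod isCompact_univ).uniformContinuousOn_of_continuous hT.continuousOn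
  refine Metric.uniformEquicontinuous_iff.2 fun ε hε => ?_
  obtain ⟨δ, hδ, h⟩ := Metric.uniformContinuousOn_iff.1 huc ε hε
  exact ⟨δ, hδ, fun x y hxy a => h (a, x) ⟨a.2, trivial⟩ (a, y) ⟨a.2, trivial⟩
    (by simpa [Prod.dist_eq] using hxy)⟩

lemma dist_le_of_lipschitzWith_path {E β : Type*} [PseudoMetricSpace E] [PseudoMetricSpace β]
    {γ : I → E} {K : ℝ≥0} (hγ : LipschitzWith K γ) {f : E → β} {δ ε : ℝ} (hδ : 0 < δ)
    (hε : 0 ≤ ε) (hf : ∀ a b, dist a b < δ → dist (f a) (f b) ≤ ε) :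
    dist (f (γ 0)) (f (γ 1)) ≤ ε + ε / δ * K := by
  set n : ℕ := ⌊K / δ⌋₊ + 1
  have hn : (0 : ℝ) < n := by positivity
  have hKn : K / δ < n := by simpa [n] using Nat.lt_floor_add_one (K / δ)
  have hnK : (n : ℝ) ≤ K / δ + 1 := by
    simpa [n] using Nat.floor_le (show 0 ≤ K / δ by positivity)
  let c : ℕ → E := fun k => γ (Set.projIcc 0 1 zero_le_one (k / n))
  have hc0 : c 0 = γ 0 := by simp [c]
  have hcn : c n = γ 1 := by simp [c, hn.ne']
  have hstep (k : ℕ) : dist (c k) (c (k + 1)) < δ := calc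
    dist (c k) (c (k + 1)) ≤ K * dist ((k : ℝ) / n) ((k + 1 : ℕ) / n) := by
      simpa [c] using (hγ.comp (LipschitzWith.projIcc zero_le_one)).dist_le_mul
        ((k : ℝ) / n) ((k + 1 : ℕ) / n)
    _ = K / n := by
      rw [dist_comm, Real.dist_eq, ← sub_div, Nat.cast_succ, add_sub_cancel_left,
        abs_of_pos (by positivity), mul_one_div]
    _ < δ := by rwa [div_lt_comm₀ hn hδ]
  calc dist (f (γ 0)) (f (γ 1))
      ≤ ∑ k ∈ Finset.range n, dist (f (c k)) (f (c (k + 1))) := by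
        simpa only [hc0, hcn] using dist_le_range_sum_dist (fun k => f (c k)) n
    _ ≤ n * ε := by
        simpa using Finset.sum_le_card_nsmul (Finset.range n) _ ε fun k _ => hf _ _ (hstep k)
    _ ≤ (K / δ + 1) * ε := by gcongr
    _ = ε + ε / δ * K := by ring

end Equicontinuity

section StraightPath

variable {X : Type*} [MeasurableSpace X]

/-- The straight line `s ↦ (1 - s) μ + s ν` in the convex set of probability measures. -/
noncomputable def straightPath (μ ν : ProbabilityMeasure X) (s : I) : ProbabilityMeasure X :=
  ⟨unitInterval.toNNReal (unitInterval.symm s) • (μ : Measure X) +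
      unitInterval.toNNReal s • (ν : Measure X), ⟨by
    simp [← ENNReal.coe_add]⟩⟩

lemma straightPath_zero (μ ν : ProbabilityMeasure X) : straightPath μ ν 0 = μ := by
  ext; simp [straightPath]

lemma straightPath_one (μ ν : ProbabilityMeasure X) : straightPath μ ν 1 = ν := by
  ext; simp [straightPath]

lemma integral_straightPath [TopologicalSpace X] [CompactSpace X] [OpensMeasurableSpace X]
    (μ ν : ProbabilityMeasure X) (s : I) {g : X → ℝ} (hg : Continuous g) :
    ∫ x, g x ∂(straightPath μ ν s : Measure X) =
      (1 - s) * ∫ x, g x ∂(μ : Measure X) + s * ∫ x, g x ∂(ν : Measure X) := by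
  have hμ := integrable_of_continuous (μ : Measure X) hg
  have hν := integrable_of_continuous (ν : Measure X) hg
  simp [straightPath, integral_add_measure, hμ.smul_measure_nnreal, hν.smul_measure_nnreal,
    integral_smul_nnreal_measure, NNReal.smul_def]

end StraightPath

lemma isEmbedding_of_tendsto_dist {E E' : Type*} [TopologicalSpace E] [CompactSpace E]
    [MetricSpace E'] {f : E → E'} (hf : Function.Injective f)
    (h : ∀ x, Tendsto (fun y => dist (f x) (f y)) (𝓝 x) (𝓝 0)) : IsEmbedding f := by
  have hcont : Continuous f := continuous_iff_continuousAt.2 fun x =>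
    tendsto_iff_dist_tendsto_zero.2 ((h x).congr fun y => dist_comm _ _)
  exact (hcont.isClosedEmbedding hf).isEmbedding

section Wasserstein

lemma W1_le {X : Type*} [PseudoMetricSpace X] [MeasurableSpace X] {μ ν : ProbabilityMeasure X}
    {c : ℝ} (h : ∀ f : X → ℝ, LipschitzWith 1 f →
      |∫ x, f x ∂(μ : Measure X) - ∫ x, f x ∂(ν : Measure X)| ≤ c) : W1 μ ν ≤ c :=
  have : Nonempty {f : X → ℝ // LipschitzWith 1 f} := ⟨_, LipschitzWith.const' (0 : ℝ)⟩
  ciSup_le fun f => h f f.2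

lemma dist_apply_le_diam {X : Type*} [PseudoMetricSpace X] [CompactSpace X] {f : X → ℝ}
    (hf : LipschitzWith 1 f) (x y : X) :
    dist (f x) (f y) ≤ Metric.diam (Set.univ : Set X) := by
  calc dist (f x) (f y) ≤ dist x y := by simpa using hf.dist_le_mul x y
    _ ≤ _ := Metric.dist_le_diam_of_mem Metric.isBounded_of_compactSpace (Set.mem_univ x)
      (Set.mem_univ y)

variable {X : Type*} [MetricSpace X] [CompactSpace X] [MeasurableSpace X] [BorelSpace X]

lemma dist_integral_apply_le_diam {f : X → ℝ} (hf : LipschitzWith 1 f) (μ : ProbabilityMeasure X)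
    (x : X) : dist (∫ y, f y ∂(μ : Measure X)) (f x) ≤ Metric.diam (Set.univ : Set X) := by
  have h := dist_integral_le_dist μ ⟨f, hf.continuous⟩ (.const X (f x))
  simp only [ContinuousMap.coe_mk, ContinuousMap.const_apply, integral_const, probReal_univ,
    one_smul] at h
  exact h.trans ((ContinuousMap.dist_le Metric.diam_nonneg).2 fun y => dist_apply_le_diam hf y x)

lemma abs_integral_sub_le_W1 {f : X → ℝ} (hf : LipschitzWith 1 f) (μ ν : ProbabilityMeasure X) :
    |∫ x, f x ∂(μ : Measure X) - ∫ x, f x ∂(ν : Measure X)| ≤ W1 μ ν := by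
  obtain ⟨x⟩ := μ.nonempty
  refine le_ciSup (f := fun g : {g : X → ℝ // LipschitzWith 1 g} =>
    |∫ x, g.1 x ∂(μ : Measure X) - ∫ x, g.1 x ∂(ν : Measure X)|)
    ⟨Metric.diam (Set.univ : Set X) + Metric.diam (Set.univ : Set X), ?_⟩ ⟨f, hf⟩
  rintro _ ⟨⟨g, hg⟩, rfl⟩
  exact (dist_triangle_right _ _ (g x)).trans
    (add_le_add (dist_integral_apply_le_diam hg μ x) (dist_integral_apply_le_diam hg ν x))

lemma abs_integral_sub_le_mul_W1 {K : ℝ≥0} (hK : 0 < K) {f : X → ℝ} (hf : LipschitzWith K f)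
    (μ ν : ProbabilityMeasure X) :
    |∫ x, f x ∂(μ : Measure X) - ∫ x, f x ∂(ν : Measure X)| ≤ K * W1 μ ν := by
  have hscaled : LipschitzWith 1 fun x => (K : ℝ)⁻¹ * f x := .of_dist_le_mul fun x y => by
    rw [Real.dist_eq, ← mul_sub, abs_mul, abs_of_pos (by positivity), NNReal.coe_one, one_mul,
      inv_mul_le_iff₀ (by positivity)]
    exact hf.dist_le_mul x y
  have h := abs_integral_sub_le_W1 hscaled μ ν
  rwa [integral_const_mul, integral_const_mul, ← mul_sub, abs_mul, abs_of_pos (by positivity),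
    inv_mul_le_iff₀ (by positivity)] at h

lemma exists_finset_W1_le {ε : ℝ} (hε : 0 < ε) :
    ∃ s : Finset C(X, ℝ), ∀ μ ν : ProbabilityMeasure X,
      W1 μ ν ≤ ε + ∑ g ∈ s, |∫ x, g x ∂(μ : Measure X) - ∫ x, g x ∂(ν : Measure X)| := by
  set D := Metric.diam (Set.univ : Set X)
  let S : Set C(X, ℝ) := {f | LipschitzWith 1 f ∧ ∀ x, f x ∈ Set.Icc (-D) D}
  have hequi : Equicontinuous fun f : S => (f : X → ℝ) :=
    (LipschitzWith.uniformEquicontinuous _ 1 fun f => f.2.1).equicontinuous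
  have hS : TotallyBounded S := (isCompact_closure_of_equicontinuous isCompact_Icc
    (fun f hf => hf.2) hequi).totallyBounded.subset subset_closure
  obtain ⟨t, ht, hSt⟩ := Metric.totallyBounded_iff.1 hS (ε / 2) (half_pos hε)
  refine ⟨ht.toFinset, fun μ ν => W1_le fun f hf => ?_⟩
  obtain ⟨x₀⟩ := μ.nonempty
  let f₀ : C(X, ℝ) := ⟨fun x => f x - f x₀, hf.continuous.sub continuous_const⟩
  have hf₀ : f₀ ∈ S :=
    ⟨fun x y => by simpa [f₀] using hf x y, fun x => abs_le.1 (dist_apply_le_diam hf x x₀)⟩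
  obtain ⟨g, hg, hfg⟩ := Set.mem_iUnion₂.1 (hSt hf₀)
  have hcenter (m : ProbabilityMeasure X) :
      ∫ x, f x ∂(m : Measure X) = ∫ x, f₀ x ∂(m : Measure X) + f x₀ := by
    simp [f₀, integral_sub (integrable_of_continuous _ hf.continuous)]
  have hclose (m : ProbabilityMeasure X) :
      dist (∫ x, f₀ x ∂(m : Measure X)) (∫ x, g x ∂(m : Measure X)) ≤ ε / 2 :=
    (dist_integral_le_dist m f₀ g).trans (Metric.mem_ball.1 hfg).le
  calc |∫ x, f x ∂(μ : Measure X) - ∫ x, f x ∂(ν : Measure X)|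
      = dist (∫ x, f₀ x ∂(μ : Measure X)) (∫ x, f₀ x ∂(ν : Measure X)) := by
        rw [hcenter, hcenter, add_sub_add_right_eq_sub, Real.dist_eq]
    _ ≤ ε + dist (∫ x, g x ∂(μ : Measure X)) (∫ x, g x ∂(ν : Measure X)) := by
        linarith [dist_triangle4_right (∫ x, f₀ x ∂(μ : Measure X)) (∫ x, f₀ x ∂(ν : Measure X))
          (∫ x, g x ∂(μ : Measure X)) (∫ x, g x ∂(ν : Measure X)), hclose μ, hclose ν]
    _ ≤ _ := by
        gcongr
        exact Finset.single_le_sum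
          (f := fun g => |∫ x, g x ∂(μ : Measure X) - ∫ x, g x ∂(ν : Measure X)|)
          (fun _ _ => abs_nonneg _) (ht.mem_toFinset.2 hg)

lemma tendsto_W1_nhds (μ : ProbabilityMeasure X) : Tendsto (W1 μ) (𝓝 μ) (𝓝 0) := by
  have hnonneg (ν : ProbabilityMeasure X) : 0 ≤ W1 μ ν :=
    (abs_nonneg _).trans (abs_integral_sub_le_W1 (LipschitzWith.const' 0) μ ν)
  refine tendsto_order.2 ⟨fun a ha => .of_forall fun ν => ha.trans_le (hnonneg ν), fun ε hε => ?_⟩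
  obtain ⟨s, hs⟩ := exists_finset_W1_le (X := X) (half_pos hε)
  have hcont : Continuous fun ν : ProbabilityMeasure X =>
      ∑ g ∈ s, |∫ x, g x ∂(μ : Measure X) - ∫ x, g x ∂(ν : Measure X)| := by
    refine continuous_finsetSum _ fun g _ => Continuous.abs ?_
    exact continuous_const.sub (ProbabilityMeasure.continuous_integral_continuousMap g)
  filter_upwards [(hcont.tendsto μ).eventually_lt_const (u := ε / 2) (by simpa using hε)] with ν hν
  linarith [hs μ ν]

lemma eq_of_W1_eq_zero {μ ν : ProbabilityMeasure X} (h : W1 μ ν = 0) : μ = ν := by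
  refine tendsto_nhds_unique (tendsto_const_nhds (x := μ) (f := (atTop : Filter ℕ))) <|
    tendsto_iff_forall_lipschitz_integral_tendsto.2 ?_
  rintro f - ⟨K, hK⟩
  have := abs_integral_sub_le_mul_W1 (by positivity : 0 < K + 1) (hK.weaken (by simp)) μ ν
  rw [h, mul_zero, abs_nonpos_iff, sub_eq_zero] at this
  rw [this]
  exact tendsto_const_nhds

/-- The Kantorovich distance `W1` as a metric, carrying the topology that it induces. -/
noncomputable abbrev kantorovichMetricSpace : MetricSpace (ProbabilityMeasure X) where
  dist := W1
  dist_self μ := by simp [W1]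
  dist_comm μ ν := by simp only [W1, abs_sub_comm]
  dist_triangle μ ν ξ := W1_le fun f hf => (abs_sub_le _ _ _).trans
    (add_le_add (abs_integral_sub_le_W1 hf μ ν) (abs_integral_sub_le_W1 hf ν ξ))
  eq_of_dist_eq_zero := eq_of_W1_eq_zero

/-- The Kantorovich distance `W1` as a metric on `ProbabilityMeasure X` whose topology is, by
definition, the topology of weak convergence. -/
noncomputable abbrev w1MetricSpace : MetricSpace (ProbabilityMeasure X) :=
  @IsEmbedding.comapMetricSpace _ _ _ kantorovichMetricSpace id <|
    @isEmbedding_of_tendsto_dist _ _ _ _ kantorovichMetricSpace _ Function.injective_id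
      tendsto_W1_nhds

attribute [local instance] w1MetricSpace

lemma lipschitzWith_straightPath (μ ν : ProbabilityMeasure X) :
    LipschitzWith (nndist μ ν) (straightPath μ ν) := by
  have hW1 (s r : I) : W1 (straightPath μ ν s) (straightPath μ ν r) ≤ W1 μ ν * dist s r := by
    refine W1_le fun f hf => ?_
    rw [integral_straightPath μ ν s hf.continuous, integral_straightPath μ ν r hf.continuous]
    calc _ = |∫ x, f x ∂(μ : Measure X) - ∫ x, f x ∂(ν : Measure X)| * dist s r := by
          rw [Subtype.dist_eq, Real.dist_eq, ← abs_neg, ← abs_mul]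
          ring_nf
      _ ≤ W1 μ ν * dist s r := by
          gcongr
          exact abs_integral_sub_le_W1 hf μ ν
  exact .of_dist_le_mul hW1

lemma exists_dist_le_add_mul_dist {ι β : Type*} [PseudoMetricSpace β]
    {F : ι → ProbabilityMeasure X → β} (hF : UniformEquicontinuous F) {ε : ℝ} (hε : 0 < ε) :
    ∃ C > 0, ∀ i μ ν, dist (F i μ) (F i ν) ≤ ε + C * dist μ ν := by
  obtain ⟨δ, hδ, h⟩ := Metric.uniformEquicontinuous_iff.1 hF ε hε
  refine ⟨ε / δ, by positivity, fun i μ ν => ?_⟩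
  simpa [straightPath_zero, straightPath_one] using dist_le_of_lipschitzWith_path
    (lipschitzWith_straightPath μ ν) hδ hε.le fun a b hab => (h a b hab i).le

section LawOfLargeNumbers

lemma integral_abs_sub_integral_le_sqrt_variance {Ω : Type*} [MeasurableSpace Ω] {m : Measure Ω}
    [IsProbabilityMeasure m] {S : Ω → ℝ} (hS : MemLp S 2 m) :
    ∫ ω, |S ω - m[S]| ∂m ≤ √(Var[S; m]) := by
  refine Real.le_sqrt_of_sq_le ?_
  have h : 0 ≤ Var[fun ω => |S ω - m[S]|; m] := variance_nonneg _ _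
  have hLp : MemLp (fun ω => |S ω - m[S]|) 2 m := (hS.sub (memLp_const _)).abs
  rw [variance_eq_sub hLp] at h
  rw [variance_eq_integral hS.aemeasurable]
  simpa [sq_abs] using h

lemma integral_abs_sum_sub_le {ι Y : Type*} [Fintype ι] [TopologicalSpace Y] [CompactSpace Y]
    [MeasurableSpace Y] [OpensMeasurableSpace Y] (ν : ι → ProbabilityMeasure Y) (g : C(Y, ℝ)) :
    ∫ y, |∑ i, g (y i) - ∑ i, ∫ z, g z ∂(ν i : Measure Y)|
      ∂(ProbabilityMeasure.pi ν : Measure (ι → Y)) ≤ √(Fintype.card ι) * ‖g‖ := by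
  have hg : Measurable g := g.continuous.measurable
  have hbound (y : Y) : g y ∈ Set.Icc (-‖g‖) ‖g‖ := abs_le.1 (g.norm_coe_le_norm y)
  have hLp (i : ι) : MemLp g 2 (ν i : Measure Y) :=
    memLp_of_bounded (ae_of_all _ hbound) hg.aestronglyMeasurable 2
  have hLp_eval (i : ι) : MemLp (fun y : ι → Y => g (y i)) 2 (ProbabilityMeasure.pi ν) :=
    (hLp i).comp_measurePreserving (measurePreserving_eval (fun i => (ν i : Measure Y)) i)
  have hmean : ∫ y, ∑ i, g (y i) ∂(ProbabilityMeasure.pi ν : Measure (ι → Y)) =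
      ∑ i, ∫ z, g z ∂(ν i : Measure Y) := by
    rw [integral_finsetSum _ fun i _ => (hLp_eval i).integrable one_le_two]
    exact Finset.sum_congr rfl fun i _ => integral_comp_eval hg.aestronglyMeasurable
  have hvar : Var[fun y => ∑ i, g (y i); (ProbabilityMeasure.pi ν : Measure (ι → Y))] ≤
      Fintype.card ι * ‖g‖ ^ 2 := by
    have hsum := variance_sum_pi hLp
    rw [Finset.sum_fn] at hsum
    rw [ProbabilityMeasure.toMeasure_pi, hsum, ← nsmul_eq_mul]
    refine Finset.sum_le_card_nsmul _ _ _ fun i _ => ?_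
    simpa using variance_le_sq_of_bounded (μ := (ν i : Measure Y)) (ae_of_all _ hbound)
      hg.aemeasurable
  calc _ ≤ √(Var[fun y => ∑ i, g (y i); (ProbabilityMeasure.pi ν : Measure (ι → Y))]) := by
        rw [← hmean]
        exact integral_abs_sub_integral_le_sqrt_variance (memLp_finsetSum _ fun i _ => hLp_eval i)
    _ ≤ √(Fintype.card ι * ‖g‖ ^ 2) := Real.sqrt_le_sqrt hvar
    _ = √(Fintype.card ι) * ‖g‖ := by
        rw [Real.sqrt_mul (Nat.cast_nonneg _), Real.sqrt_sq (norm_nonneg _)]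

variable [Nonempty X]

lemma integral_emp {N : ℕ} (hN : N ≠ 0) (x : Fin N → X) (g : X → ℝ) :
    ∫ z, g z ∂(emp N x : Measure X) = (N : ℝ)⁻¹ * ∑ i, g (x i) := by
  have hdirac : ∫ z, g z ∂∑ i, Measure.dirac (x i) = ∑ i, g (x i) := by
    rw [integral_finsetSum_measure fun i _ => integrable_dirac (by simp)]
    simp only [integral_dirac]
  simp [emp, hN, hdirac]

lemma continuous_emp (N : ℕ) : Continuous (emp N : (Fin N → X) → ProbabilityMeasure X) := by
  rcases eq_or_ne N 0 with rfl | hN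
  · exact continuous_of_discreteTopology
  refine ProbabilityMeasure.continuous_iff_forall_continuousMap_continuous_integral.2 fun g => ?_
  simp only [integral_emp hN]
  fun_prop

lemma continuous_W1_emp (N : ℕ) (m : ProbabilityMeasure X) :
    Continuous fun x : Fin N → X => W1 (emp N x) m :=
  Continuous.dist (continuous_emp N) (continuous_const (y := m))

lemma integral_abs_integral_emp_sub_le {N : ℕ} (hN : N ≠ 0) {ν : Fin N → ProbabilityMeasure X}
    {m : ProbabilityMeasure X} {g : C(X, ℝ)}
    (hm : ∫ z, g z ∂(m : Measure X) = (N : ℝ)⁻¹ * ∑ i, ∫ z, g z ∂(ν i : Measure X)) :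
    ∫ y, |∫ z, g z ∂(emp N y : Measure X) - ∫ z, g z ∂(m : Measure X)|
      ∂(ProbabilityMeasure.pi ν : Measure (Fin N → X)) ≤ (√N)⁻¹ * ‖g‖ := by
  simp only [integral_emp hN, hm, ← mul_sub, abs_mul, abs_inv, Nat.abs_cast, integral_const_mul]
  calc _ ≤ (N : ℝ)⁻¹ * (√N * ‖g‖) := by
        gcongr
        simpa using integral_abs_sum_sub_le ν g
    _ = (√N)⁻¹ * ‖g‖ := by
        rw [← mul_assoc, ← Real.sqrt_div_self, div_eq_inv_mul]

lemma eventually_integral_W1_emp_le {ε : ℝ} (hε : 0 < ε) :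
    ∀ᶠ N : ℕ in atTop, ∀ (ν : Fin N → ProbabilityMeasure X) (m : ProbabilityMeasure X),
      (∀ g : C(X, ℝ), ∫ z, g z ∂(m : Measure X) = (N : ℝ)⁻¹ * ∑ i, ∫ z, g z ∂(ν i : Measure X)) →
      ∫ y, W1 (emp N y) m ∂(ProbabilityMeasure.pi ν : Measure (Fin N → X)) ≤ ε := by
  obtain ⟨s, hs⟩ := exists_finset_W1_le (X := X) (half_pos hε)
  have hlim : Tendsto (fun N : ℕ => ∑ g ∈ s, (√N)⁻¹ * ‖g‖) atTop (𝓝 0) := by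
    rw [← Finset.sum_const_zero (s := s)]
    refine tendsto_finsetSum _ fun g _ => ?_
    have hsqrt : Tendsto (fun N : ℕ => √N) atTop atTop :=
      Real.tendsto_sqrt_atTop.comp tendsto_natCast_atTop_atTop
    simpa using hsqrt.inv_tendsto_atTop.mul_const ‖g‖
  filter_upwards [hlim.eventually_le_const (half_pos hε), eventually_ne_atTop 0]
    with N hN hN0 ν m hm
  let deviation (g : C(X, ℝ)) (y : Fin N → X) : ℝ :=
    |∫ z, g z ∂(emp N y : Measure X) - ∫ z, g z ∂(m : Measure X)|
  have hdev_cont (g : C(X, ℝ)) : Continuous (deviation g) :=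
    (((ProbabilityMeasure.continuous_integral_continuousMap g).comp (continuous_emp N)).sub
      continuous_const).abs
  have hint {h : (Fin N → X) → ℝ} (hh : Continuous h) :
      Integrable h (ProbabilityMeasure.pi ν : Measure (Fin N → X)) := integrable_of_continuous _ hh
  calc ∫ y, W1 (emp N y) m ∂(ProbabilityMeasure.pi ν : Measure (Fin N → X))
      ≤ ∫ y, (ε / 2 + ∑ g ∈ s, deviation g y)
          ∂(ProbabilityMeasure.pi ν : Measure (Fin N → X)) :=
        integral_mono (hint (continuous_W1_emp N m)) (hint (by fun_prop)) fun y => hs _ _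
    _ = ε / 2 + ∑ g ∈ s,
          ∫ y, deviation g y ∂(ProbabilityMeasure.pi ν : Measure (Fin N → X)) := by
        rw [integral_add (hint (by fun_prop)) (hint (by fun_prop)),
          integral_finsetSum _ fun g _ => hint (hdev_cont g)]
        simp
    _ ≤ ε / 2 + ∑ g ∈ s, (√N)⁻¹ * ‖g‖ := by
        gcongr
        exact integral_abs_integral_emp_sub_le hN0 (hm _)
    _ ≤ ε := by linarith

end LawOfLargeNumbers

section Dynamics

variable {U : Type*} [MetricSpace U] [CompactSpace U] [MeasurableSpace U] [BorelSpace U]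

/-- The law of the next state of an agent at `x` when the mean field is `μ` and the policy is `Q`,
as a function of `x` depending continuously on `(Q, μ)`. -/
noncomputable def agentKernel (p : C(X × U × ProbabilityMeasure X, ProbabilityMeasure X)) :
    C(C(X × ProbabilityMeasure X, ProbabilityMeasure U) × ProbabilityMeasure X,
      C(X, ProbabilityMeasure X)) :=
  let transition : C(X × ProbabilityMeasure X, C(U, ProbabilityMeasure X)) :=
    ContinuousMap.curry ⟨fun z => p (z.1.1, z.2, z.1.2), by fun_prop⟩
  ContinuousMap.curry
    ⟨fun z => mixture (transition (z.2, z.1.2)) (z.1.1 (z.2, z.1.2)),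
      continuous_mixture.comp (f := fun z : (C(X × ProbabilityMeasure X, ProbabilityMeasure U) ×
        ProbabilityMeasure X) × X => (transition (z.2, z.1.2), z.1.1 (z.2, z.1.2))) (by fun_prop)⟩

variable (p : C(X × U × ProbabilityMeasure X, ProbabilityMeasure X))

/-- One step of the limiting dynamics of the mean field under the policy `Q`. -/
noncomputable def meanFieldStep (Q : C(X × ProbabilityMeasure X, ProbabilityMeasure U))
    (μ : ProbabilityMeasure X) : ProbabilityMeasure X :=
  mixture (agentKernel p (Q, μ)) μ

/-- The mean field flow started at `μ₀` under the time-dependent policy `q`. -/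
noncomputable def meanFieldFlow (q : ℕ → C(X × ProbabilityMeasure X, ProbabilityMeasure U))
    (μ₀ : ProbabilityMeasure X) : ℕ → ProbabilityMeasure X
  | 0 => μ₀
  | t + 1 => meanFieldStep p (q t) (meanFieldFlow q μ₀ t)

lemma continuous_meanFieldStep :
    Continuous fun z : C(X × ProbabilityMeasure X, ProbabilityMeasure U) × ProbabilityMeasure X =>
      meanFieldStep p z.1 z.2 :=
  continuous_mixture.comp (f := fun z => (agentKernel p z, z.2)) (by fun_prop)

lemma uniformEquicontinuous_meanFieldStep {ι : Type*}
    {Q : ι → C(X × ProbabilityMeasure X, ProbabilityMeasure U)}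
    (hQ : Equicontinuous fun i => (Q i : X × ProbabilityMeasure X → ProbabilityMeasure U)) :
    UniformEquicontinuous fun i => meanFieldStep p (Q i) := by
  have hequi : Equicontinuous fun R : Set.range Q =>
      (R.1 : X × ProbabilityMeasure X → ProbabilityMeasure U) := by
    intro z V hV
    filter_upwards [hQ z V hV] with w hw
    rintro ⟨_, i, rfl⟩
    exact hw i
  have hcompact : IsCompact (closure (Set.range Q)) :=
    isCompact_closure_of_equicontinuous isCompact_univ (fun _ _ _ => Set.mem_univ _) hequi
  exact (uniformEquicontinuous_of_isCompact hcompact (continuous_meanFieldStep p)).comp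
    fun i => ⟨Q i, subset_closure (Set.mem_range_self i)⟩

variable [Nonempty X]

/-- The joint law of the next states of `N` agents at `x` that follow the policy `Q`. -/
noncomputable def populationStep (Q : C(X × ProbabilityMeasure X, ProbabilityMeasure U)) (N : ℕ) :
    C(Fin N → X, ProbabilityMeasure (Fin N → X)) where
  toFun x := ProbabilityMeasure.pi fun i => agentKernel p (Q, emp N x) (x i)
  continuous_toFun := by
    have := continuous_emp (X := X) N
    fun_prop

/-- `mfcLawN` as a sequence of probability measures, for continuous transitions and policies. -/
noncomputable def populationLaw (q : ℕ → C(X × ProbabilityMeasure X, ProbabilityMeasure U))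
    (μ₀ : ProbabilityMeasure X) (N : ℕ) : ℕ → ProbabilityMeasure (Fin N → X)
  | 0 => ProbabilityMeasure.pi fun _ => μ₀
  | t + 1 => mixture (populationStep p (q t) N) (populationLaw q μ₀ N t)

lemma coe_populationLaw (q : ℕ → C(X × ProbabilityMeasure X, ProbabilityMeasure U))
    (μ₀ : ProbabilityMeasure X) (N t : ℕ) :
    (populationLaw p q μ₀ N t : Measure (Fin N → X)) =
      mfcLawN (fun x u μ => p (x, u, μ)) (fun t x μ => q t (x, μ)) μ₀ N t := by
  induction t with
  | zero => rfl
  | succ t ih =>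
    rw [mfcLawN, ← ih]
    rfl

lemma eventually_integral_W1_populationStep_le {ε : ℝ} (hε : 0 < ε) :
    ∀ᶠ N : ℕ in atTop, ∀ (Q : C(X × ProbabilityMeasure X, ProbabilityMeasure U)) (x : Fin N → X),
      ∫ y, W1 (emp N y) (meanFieldStep p Q (emp N x))
        ∂(populationStep p Q N x : Measure (Fin N → X)) ≤ ε := by
  filter_upwards [eventually_integral_W1_emp_le (X := X) hε, eventually_ne_atTop 0]
    with N hN hN0 Q x
  refine hN _ _ fun g => ?_
  rw [meanFieldStep, integral_mixture _ _ g.continuous, integral_emp hN0]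

variable {p} in
lemma integral_W1_mixture_populationStep_le {N : ℕ}
    {Q : C(X × ProbabilityMeasure X, ProbabilityMeasure U)} {δ ε C : ℝ}
    (hpopulation : ∀ x, ∫ y, W1 (emp N y) (meanFieldStep p Q (emp N x))
      ∂(populationStep p Q N x : Measure (Fin N → X)) ≤ δ)
    (hmodulus : ∀ μ ν, dist (meanFieldStep p Q μ) (meanFieldStep p Q ν) ≤ ε + C * dist μ ν)
    (ξ : ProbabilityMeasure (Fin N → X)) (μ : ProbabilityMeasure X) :
    ∫ y, W1 (emp N y) (meanFieldStep p Q μ)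
      ∂(mixture (populationStep p Q N) ξ : Measure (Fin N → X)) ≤
        δ + ε + C * ∫ x, W1 (emp N x) μ ∂(ξ : Measure (Fin N → X)) := by
  have hint (m : ProbabilityMeasure (Fin N → X)) (ν : ProbabilityMeasure X) :
      Integrable (fun x => W1 (emp N x) ν) (m : Measure (Fin N → X)) :=
    integrable_of_continuous _ (continuous_W1_emp N ν)
  have hstep (x : Fin N → X) : ∫ y, W1 (emp N y) (meanFieldStep p Q μ)
      ∂(populationStep p Q N x : Measure (Fin N → X)) ≤ δ + ε + C * W1 (emp N x) μ := calc
    _ ≤ ∫ y, (W1 (emp N y) (meanFieldStep p Q (emp N x)) +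
          W1 (meanFieldStep p Q (emp N x)) (meanFieldStep p Q μ))
          ∂(populationStep p Q N x : Measure (Fin N → X)) :=
      integral_mono (hint _ _) ((hint _ _).add (integrable_const _)) fun y =>
        dist_triangle (emp N y) _ _
    _ = ∫ y, W1 (emp N y) (meanFieldStep p Q (emp N x))
          ∂(populationStep p Q N x : Measure (Fin N → X)) +
          W1 (meanFieldStep p Q (emp N x)) (meanFieldStep p Q μ) := by
      simp [integral_add (hint _ _) (integrable_const _)]
    _ ≤ δ + (ε + C * W1 (emp N x) μ) := add_le_add (hpopulation x) (hmodulus _ _)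
    _ = δ + ε + C * W1 (emp N x) μ := (add_assoc _ _ _).symm
  let W : C(Fin N → X, ℝ) :=
    ⟨fun y => W1 (emp N y) (meanFieldStep p Q μ), continuous_W1_emp N _⟩
  have hcont : Continuous fun x => ∫ y, W y ∂(populationStep p Q N x : Measure (Fin N → X)) :=
    (ProbabilityMeasure.continuous_integral_continuousMap W).comp (populationStep p Q N).continuous
  rw [integral_mixture _ _ (continuous_W1_emp N _)]
  calc _ ≤ ∫ x, (δ + ε + C * W1 (emp N x) μ) ∂(ξ : Measure (Fin N → X)) :=
        integral_mono (integrable_of_continuous _ hcont)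
          ((integrable_const _).add ((hint _ _).const_mul C)) hstep
    _ = δ + ε + C * ∫ x, W1 (emp N x) μ ∂(ξ : Measure (Fin N → X)) := by
        simp [integral_add (integrable_const _) ((hint _ _).const_mul C), integral_const_mul]

lemma eventually_integral_W1_meanFieldFlow_le {ι : Type*}
    {q : ι → ℕ → C(X × ProbabilityMeasure X, ProbabilityMeasure U)}
    (hq : ∀ t, Equicontinuous fun i => (q i t : X × ProbabilityMeasure X → ProbabilityMeasure U))
    (μ₀ : ProbabilityMeasure X) (t : ℕ) {ε : ℝ} (hε : 0 < ε) :
    ∀ᶠ N : ℕ in atTop, ∀ i, ∫ x, W1 (emp N x) (meanFieldFlow p (q i) μ₀ t)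
      ∂(populationLaw p (q i) μ₀ N t : Measure (Fin N → X)) ≤ ε := by
  induction t generalizing ε with
  | zero =>
    filter_upwards [eventually_integral_W1_emp_le (X := X) hε, eventually_ne_atTop 0]
      with N hN hN0 i
    refine hN _ _ fun g => ?_
    simp [meanFieldFlow, hN0]
  | succ t ih =>
    obtain ⟨C, hC, hlip⟩ := exists_dist_le_add_mul_dist
      (uniformEquicontinuous_meanFieldStep p (hq t)) (show 0 < ε / 3 by positivity)
    filter_upwards [eventually_integral_W1_populationStep_le p (show 0 < ε / 3 by positivity),
      ih (show 0 < ε / 3 / C by positivity)] with N hpopulation hN i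
    calc _ ≤ ε / 3 + ε / 3 + C * ∫ x, W1 (emp N x) (meanFieldFlow p (q i) μ₀ t)
            ∂(populationLaw p (q i) μ₀ N t : Measure (Fin N → X)) :=
          integral_W1_mixture_populationStep_le (hpopulation _) (hlip i) _ _
      _ ≤ ε / 3 + ε / 3 + C * (ε / 3 / C) := by
          gcongr
          exact hN i
      _ = ε := by field_simp; ring

lemma eventually_abs_integral_emp_sub_meanFieldFlow_le {ι κ : Type*}
    {q : ι → ℕ → C(X × ProbabilityMeasure X, ProbabilityMeasure U)}
    (hq : ∀ t, Equicontinuous fun i => (q i t : X × ProbabilityMeasure X → ProbabilityMeasure U))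
    {f : κ → ProbabilityMeasure X → ℝ} (hf : Equicontinuous f) (μ₀ : ProbabilityMeasure X) (t : ℕ)
    {ε : ℝ} (hε : 0 < ε) :
    ∀ᶠ N : ℕ in atTop, ∀ i k, |(∫ x, f k (emp N x) ∂(populationLaw p (q i) μ₀ N t :
      Measure (Fin N → X))) - f k (meanFieldFlow p (q i) μ₀ t)| ≤ ε := by
  obtain ⟨C, hC, hlip⟩ := exists_dist_le_add_mul_dist
    (CompactSpace.uniformEquicontinuous_of_equicontinuous hf) (half_pos hε)
  filter_upwards [eventually_integral_W1_meanFieldFlow_le p hq μ₀ t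
    (show 0 < ε / 2 / C by positivity)] with N hN i k
  set law := (populationLaw p (q i) μ₀ N t).toMeasure
  set m := meanFieldFlow p (q i) μ₀ t
  have hint {h : (Fin N → X) → ℝ} (hh : Continuous h) : Integrable h law :=
    integrable_of_continuous _ hh
  have hfN : Continuous fun x => f k (emp N x) := (hf.continuous k).comp (continuous_emp N)
  have hW1 := continuous_W1_emp N m
  have hdev : Continuous fun x => |f k (emp N x) - f k m| := (hfN.sub continuous_const).abs
  calc |∫ x, f k (emp N x) ∂law - f k m| = |∫ x, (f k (emp N x) - f k m) ∂law| := by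
        simp [integral_sub (hint hfN) (integrable_const _)]
    _ ≤ ∫ x, |f k (emp N x) - f k m| ∂law := abs_integral_le_integral_abs
    _ ≤ ∫ x, (ε / 2 + C * W1 (emp N x) m) ∂law :=
        integral_mono (hint hdev) (hint (by fun_prop)) fun x => hlip k _ _
    _ = ε / 2 + C * ∫ x, W1 (emp N x) m ∂law := by
        simp [integral_add (integrable_const _) (hint (hW1.const_mul C)), integral_const_mul]
    _ ≤ ε / 2 + C * (ε / 2 / C) := by
        gcongr
        exact hN i
    _ = ε := by field_simp; ring

end Dynamics

section EquicontinuousInW1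

lemma equicontinuous_of_abs_integral_sub_le {ι E Y : Type*} [PseudoMetricSpace E]
    [MetricSpace Y] [CompactSpace Y] [MeasurableSpace Y] [BorelSpace Y]
    {κ : ι → E → ProbabilityMeasure Y → ProbabilityMeasure X} {L : ℝ}
    (hκ : ∀ i x x' μ μ' (g : X → ℝ), LipschitzWith 1 g →
      |∫ u, g u ∂(κ i x μ : Measure X) - ∫ u, g u ∂(κ i x' μ' : Measure X)| ≤
        L * (dist x x' + W1 μ μ')) :
    Equicontinuous fun i (z : E × ProbabilityMeasure Y) => κ i z.1 z.2 := by
  refine (LipschitzWith.uniformEquicontinuous _ (L.toNNReal * 2) fun i =>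
    .of_dist_le_mul fun z w => W1_le fun g hg => ?_).equicontinuous
  calc _ ≤ L * (dist z.1 w.1 + dist z.2 w.2) := hκ i _ _ _ _ g hg
    _ ≤ L.toNNReal * (dist z w + dist z w) := by
        gcongr
        · exact L.le_coe_toNNReal
        · exact le_max_left _ _
        · exact le_max_right _ _
    _ = _ := by push_cast; ring

lemma equicontinuous_of_forall_W1_lt {F : Set (ProbabilityMeasure X → ℝ)}
    (hF : ∀ ε > (0 : ℝ), ∀ μ : ProbabilityMeasure X, ∃ δ > (0 : ℝ),
      ∀ ν : ProbabilityMeasure X, W1 μ ν < δ → ∀ f ∈ F, |f μ - f ν| < ε) :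
    Equicontinuous ((↑) : F → ProbabilityMeasure X → ℝ) := fun μ =>
  Metric.equicontinuousAt_iff.2 fun ε hε =>
    let ⟨δ, hδ, h⟩ := hF ε hε μ
    ⟨δ, hδ, fun ν hν f => h ν ((dist_comm μ ν).trans_lt hν) f f.2⟩

end EquicontinuousInW1

end Wasserstein

end MeanField

section

attribute [local instance] MeanField.w1MetricSpace

open Filter MeanField in
theorem statement10_general {X U : Type*}
    [MetricSpace X] [CompactSpace X] [MeasurableSpace X] [BorelSpace X] [Nonempty X]
    [MetricSpace U] [CompactSpace U] [MeasurableSpace U] [BorelSpace U]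
    (p : X → U → ProbabilityMeasure X → ProbabilityMeasure X)
    (hp : Continuous fun z : X × U × ProbabilityMeasure X => p z.1 z.2.1 z.2.2)
    (Pi : Set (ℕ → X → ProbabilityMeasure X → ProbabilityMeasure U))
    (hPi : ∀ t, Equicontinuous fun (π : Pi) (z : X × ProbabilityMeasure X) => π.1 t z.1 z.2)
    (F : Set (ProbabilityMeasure X → ℝ))
    (hF : Equicontinuous ((↑) : F → ProbabilityMeasure X → ℝ))
    (μ0 : ProbabilityMeasure X)
    (mf : (ℕ → X → ProbabilityMeasure X → ProbabilityMeasure U) → ℕ → ProbabilityMeasure X)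
    (hmf0 : ∀ q ∈ Pi, mf q 0 = μ0)
    (hmf : ∀ q ∈ Pi, ∀ t : ℕ,
      (mf q (t + 1) : Measure X) = (mf q t : Measure X).bind fun x =>
        ((q t x (mf q t) : Measure U)).bind fun u => (p x u (mf q t) : Measure X)) :
    ∀ t : ℕ, ∀ ε > (0 : ℝ), ∃ N0 : ℕ, ∀ N ≥ N0, ∀ q ∈ Pi, ∀ f ∈ F,
      |(∫ x, f (emp N x) ∂(mfcLawN p q μ0 N t)) - f (mf q t)| ≤ ε := by
  intro t ε hε
  let kernel : C(X × U × ProbabilityMeasure X, ProbabilityMeasure X) := ⟨_, hp⟩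
  let policy (q : Pi) (t : ℕ) : C(X × ProbabilityMeasure X, ProbabilityMeasure U) :=
    ⟨fun z => q.1 t z.1 z.2, (hPi t).continuous q⟩
  have hflow (q : Pi) (t : ℕ) : mf q t = meanFieldFlow kernel (policy q) μ0 t := by
    induction t with
    | zero => exact hmf0 q q.2
    | succ t ih =>
      refine Subtype.ext ((hmf q q.2 t).trans ?_)
      rw [ih]
      rfl
  obtain ⟨N0, hN0⟩ := eventually_atTop.1
    (eventually_abs_integral_emp_sub_meanFieldFlow_le kernel (q := policy) hPi hF μ0 t hε)
  refine ⟨N0, fun N hN q hq f hf => ?_⟩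
  rw [hflow ⟨q, hq⟩]
  exact coe_populationLaw kernel (policy ⟨q, hq⟩) μ0 N t ▸ hN0 N hN ⟨q, hq⟩ ⟨f, hf⟩

end

/-- propagation of chaos for deterministic MFC. For compact `𝒳`, `𝒰`, continuous
kernel `p`, an equi-Lipschitz policy class `Π`, and the deterministic limiting mean field
`μ_{t+1} = ∬ p(·|x,u,μ_t) π_t(du|x,μ_t) μ_t(dx)`, for every family `ℱ` of equicontinuous
functions on `𝒫(𝒳)` and every time `t`,
`sup_{π ∈ Π} sup_{f ∈ ℱ} |E[f(μ_t^N)] − f(μ_t)| → 0` as `N → ∞`. -/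
theorem statement10 {X U : Type*}
    [MetricSpace X] [CompactSpace X] [MeasurableSpace X] [BorelSpace X] [Nonempty X]
    [MetricSpace U] [CompactSpace U] [MeasurableSpace U] [BorelSpace U]
    (p : X → U → ProbabilityMeasure X → ProbabilityMeasure X)
    (hp : Continuous fun z : X × U × ProbabilityMeasure X => p z.1 z.2.1 z.2.2)
    (L : ℝ) (hL : 0 < L)
    (Pi : Set (ℕ → X → ProbabilityMeasure X → ProbabilityMeasure U))
    (hPi : ∀ π ∈ Pi, ∀ (t : ℕ) (x x' : X) (μ μ' : ProbabilityMeasure X) (g : U → ℝ),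
      LipschitzWith 1 g →
      |∫ u, g u ∂(π t x μ : Measure U) - ∫ u, g u ∂(π t x' μ' : Measure U)|
        ≤ L * (dist x x' + W1 μ μ'))
    (F : Set (ProbabilityMeasure X → ℝ))
    (hF : ∀ ε > (0 : ℝ), ∀ μ : ProbabilityMeasure X, ∃ δ > (0 : ℝ),
      ∀ ν : ProbabilityMeasure X, W1 μ ν < δ → ∀ f ∈ F, |f μ - f ν| < ε)
    (μ0 : ProbabilityMeasure X)
    (mf : (ℕ → X → ProbabilityMeasure X → ProbabilityMeasure U) → ℕ → ProbabilityMeasure X)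
    (hmf0 : ∀ q, mf q 0 = μ0)
    (hmf : ∀ q ∈ Pi, ∀ t : ℕ,
      (mf q (t + 1) : Measure X) = (mf q t : Measure X).bind fun x =>
        ((q t x (mf q t) : Measure U)).bind fun u => (p x u (mf q t) : Measure X)) :
    ∀ t : ℕ, ∀ ε > (0 : ℝ), ∃ N0 : ℕ, ∀ N ≥ N0, ∀ q ∈ Pi, ∀ f ∈ F,
      |(∫ x, f (emp N x) ∂(mfcLawN p q μ0 N t)) - f (mf q t)| ≤ ε := by
  exact statement10_general p hp Pi (fun t => MeanField.equicontinuous_of_abs_integral_sub_le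
    (κ := fun π : Pi => π.1 t) fun π => hPi π π.2 t) F
    (MeanField.equicontinuous_of_forall_W1_lt hF) μ0 mf (fun q _ => hmf0 q) hmf
end

section
/- (Approximate optimality of MFC solutions, deterministic MFC.) Let 𝒳, 𝒰 be compact metric spaces, p and r continuous, γ ∈ (0,1), and Π an equi-Lipschitz class of policies. If π* is an optimal deterministic MFC policy, i.e., π* ∈ argmax_{π̂} J(π̂) over MFC policies, then the induced finite-agent policy Φ(π*) ∈ Π is ε-optimal in the N-agent system: J^N(Φ(π*)) ≥ sup_{π ∈ Π} J^N(π) − ε, where ε = ε(N) → 0 as N → ∞. -/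
open MeasureTheory

/-- The action set `ℋ(μ)`: joint distributions on `𝒳 × 𝒰` with first marginal `μ`. -/
def Hset {X U : Type*} [MeasurableSpace X] [MeasurableSpace U]
    (μ : ProbabilityMeasure X) : Set (ProbabilityMeasure (X × U)) :=
  {h | (h : Measure (X × U)).map Prod.fst = (μ : Measure X)}

/-- Deterministic trajectory of the MFC MDP under transition `T` and (time-variant) MFC policy
`pol`, started at `μ0`. -/
noncomputable def mfcTraj {X U : Type*} [MeasurableSpace X] [MeasurableSpace U]
    (T : ProbabilityMeasure X → ProbabilityMeasure (X × U) → ProbabilityMeasure X)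
    (pol : ℕ → ProbabilityMeasure X → ProbabilityMeasure (X × U))
    (μ0 : ProbabilityMeasure X) : ℕ → ProbabilityMeasure X
  | 0 => μ0
  | t + 1 => T (mfcTraj T pol μ0 t) (pol t (mfcTraj T pol μ0 t))

/-!
On a compact space `W1` metrizes the weak topology, so the probability measures form a compact
metric space and an equi-Lipschitz class of policies gives a uniformly equicontinuous family of
mean-field steps `μ ↦ meanFieldStep p q μ`. Given the joint state, the agents move independently and
the average of their transition laws is the mean-field step of the empirical measure; a law of large
numbers whose rate does not depend on the policy then shows, by induction on time, that the
empirical measure at each time converges to the limiting mean field uniformly over the class.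
Discounting turns this into uniform convergence of the `N`-agent objectives.

Gluing an agent-level policy to the current mean field, `μ ⊗ π_t(μ)`, produces an MFC policy with
the same trajectory. Hence `π*` is optimal in the limit among the agent-level policies, and it loses
at most twice the uniform error in the `N`-agent system.
-/

open Filter Topology ProbabilityTheory
open scoped BoundedContinuousFunction NNReal ENNReal

lemma exists_finset_dist_le_of_equicontinuous {X ι : Type*} [TopologicalSpace X] [CompactSpace X]
    {F : ι → X →ᵇ ℝ} (hF : Equicontinuous fun i => ⇑(F i)) {C : ℝ} (hC : ∀ i x, |F i x| ≤ C)
    {ε : ℝ} (hε : 0 < ε) :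
    ∃ s : Finset (X →ᵇ ℝ), ∀ i, ∃ g ∈ s, dist (F i) g ≤ ε := by
  have hcompact : IsCompact (closure (Set.range F)) := by
    refine BoundedContinuousFunction.arzela_ascoli (Set.Icc (-C) C) isCompact_Icc _ ?_ ?_
    · rintro _ x ⟨i, rfl⟩
      exact abs_le.1 (hC i x)
    · exact fun x V hV => (hF x V hV).mono fun y hy => by
        rintro ⟨_, i, rfl⟩
        exact hy i
  obtain ⟨t, -, ht, hcover⟩ := hcompact.finite_cover_balls hε
  refine ⟨ht.toFinset, fun i => ?_⟩
  obtain ⟨g, hg, hdist⟩ := Set.mem_iUnion₂.1 (hcover (subset_closure ⟨i, rfl⟩))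
  exact ⟨g, ht.mem_toFinset.2 hg, (Metric.mem_ball.1 hdist).le⟩

lemma abs_sub_le_diam_of_lipschitzWith_one {X : Type*} [PseudoMetricSpace X]
    [CompactSpace X] {f : X → ℝ} (hf : LipschitzWith 1 f) (x y : X) :
    |f x - f y| ≤ Metric.diam (Set.univ : Set X) := by
  simpa [Real.dist_eq] using (hf.dist_le_mul x y).trans
    (mul_le_mul_of_nonneg_left (Metric.dist_le_diam_of_mem isCompact_univ.isBounded
      (Set.mem_univ x) (Set.mem_univ y)) zero_le_one)

lemma equicontinuous_lipschitz_sub {X : Type*} [PseudoMetricSpace X] (x₀ : X) :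
    Equicontinuous fun (f : {f : X → ℝ // LipschitzWith 1 f}) x => f.1 x - f.1 x₀ :=
  (LipschitzWith.uniformEquicontinuous _ 1 fun f => LipschitzWith.of_dist_le_mul fun x y => by
    simpa using f.2.dist_le_mul x y).equicontinuous

section Integral

variable {X : Type*} [TopologicalSpace X] [CompactSpace X] [MeasurableSpace X]
  [OpensMeasurableSpace X]

lemma integrable_of_continuous (μ : Measure X) [IsFiniteMeasure μ] {f : X → ℝ}
    (hf : Continuous f) : Integrable f μ :=
  (BoundedContinuousFunction.mkOfCompact ⟨f, hf⟩).integrable μ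

lemma continuous_integral_of_continuous {f : X → ℝ} (hf : Continuous f) :
    Continuous fun μ : ProbabilityMeasure X => ∫ x, f x ∂(μ : Measure X) :=
  ProbabilityMeasure.continuous_integral_continuousMap (⟨f, hf⟩ : C(X, ℝ))

lemma integral_const_add_of_continuous (μ : Measure X) [IsProbabilityMeasure μ] (c : ℝ) {f : X → ℝ}
    (hf : Continuous f) : ∫ x, (c + f x) ∂μ = c + ∫ x, f x ∂μ := by
  rw [integral_add (integrable_const c) (integrable_of_continuous μ hf)]
  simp

lemma abs_integral_sub_integral_le (μ : Measure X) [IsProbabilityMeasure μ] {f g : X → ℝ} {c : ℝ}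
    (hf : Continuous f) (hg : Continuous g) (h : ∀ x, |f x - g x| ≤ c) :
    |∫ x, f x ∂μ - ∫ x, g x ∂μ| ≤ c := by
  rw [← integral_sub (integrable_of_continuous μ hf) (integrable_of_continuous μ hg)]
  simpa using norm_integral_le_of_norm_le_const (μ := μ) (f := fun x => f x - g x) (ae_of_all _ h)

/- By Arzelà–Ascoli the family has a finite net for the uniform distance; the integrals of its
members are therefore controlled, up to `ε`, by finitely many test functions. -/
lemma exists_finset_abs_integral_sub_le {ι : Type*} {F : ι → X → ℝ} (hF : Equicontinuous F)
    {C : ℝ} (hC : ∀ i x, |F i x| ≤ C) {ε : ℝ} (hε : 0 < ε) :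
    ∃ s : Finset (X →ᵇ ℝ), ∀ i, ∀ μ ν : ProbabilityMeasure X,
      |∫ x, F i x ∂(μ : Measure X) - ∫ x, F i x ∂(ν : Measure X)|
        ≤ ε + ∑ g ∈ s, |∫ x, g x ∂(μ : Measure X) - ∫ x, g x ∂(ν : Measure X)| := by
  let G i : X →ᵇ ℝ := BoundedContinuousFunction.mkOfCompact ⟨F i, hF.continuous i⟩
  obtain ⟨s, hs⟩ := exists_finset_dist_le_of_equicontinuous (F := G) hF hC (half_pos hε)
  refine ⟨s, fun i μ ν => ?_⟩
  obtain ⟨g, hg, hdist⟩ := hs i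
  have hclose x : |F i x - g x| ≤ ε / 2 :=
    (BoundedContinuousFunction.dist_coe_le_dist (f := G i) (g := g) x).trans hdist
  have hμ := abs_integral_sub_integral_le (μ : Measure X) (hF.continuous i) g.continuous hclose
  have hν := abs_integral_sub_integral_le (ν : Measure X) (hF.continuous i) g.continuous hclose
  have hsum := Finset.single_le_sum (f := fun g : X →ᵇ ℝ =>
    |∫ x, g x ∂(μ : Measure X) - ∫ x, g x ∂(ν : Measure X)|) (fun _ _ => abs_nonneg _) hg
  rw [abs_le] at hμ hν ⊢
  have hle := abs_le.1 hsum
  constructor <;> linarith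

lemma equicontinuous_integral {ι : Type*} {F : ι → X → ℝ} (hF : Equicontinuous F) {C : ℝ}
    (hC : ∀ i x, |F i x| ≤ C) :
    Equicontinuous fun i (μ : ProbabilityMeasure X) => ∫ x, F i x ∂(μ : Measure X) := by
  refine fun μ => Metric.equicontinuousAt_iff_right.2 fun ε hε => ?_
  obtain ⟨s, hs⟩ := exists_finset_abs_integral_sub_le hF hC (half_pos hε)
  have hcont : Continuous fun ν : ProbabilityMeasure X =>
      ∑ g ∈ s, |∫ x, g x ∂(μ : Measure X) - ∫ x, g x ∂(ν : Measure X)| :=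
    continuous_finsetSum _ fun g _ =>
      (continuous_const.sub (continuous_integral_of_continuous g.continuous)).abs
  filter_upwards [(hcont.tendsto' μ 0 (by simp)).eventually (gt_mem_nhds (half_pos hε))] with ν hν i
  rw [Real.dist_eq]
  linarith [hs i μ ν]

end Integral

section W1

variable {X : Type*} [PseudoMetricSpace X] [CompactSpace X] [MeasurableSpace X]
  [OpensMeasurableSpace X]

lemma integral_sub_const_sub_integral_sub_const (μ ν : ProbabilityMeasure X) {f : X → ℝ}
    (hf : Continuous f) (c : ℝ) :
    ∫ x, (f x - c) ∂(μ : Measure X) - ∫ x, (f x - c) ∂(ν : Measure X)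
      = ∫ x, f x ∂(μ : Measure X) - ∫ x, f x ∂(ν : Measure X) := by
  simp [integral_sub (integrable_of_continuous _ hf) (integrable_const c)]

lemma bddAbove_range_abs_integral_sub (μ ν : ProbabilityMeasure X) :
    BddAbove (Set.range fun f : {f : X → ℝ // LipschitzWith 1 f} =>
      |∫ x, (f : X → ℝ) x ∂(μ : Measure X) - ∫ x, (f : X → ℝ) x ∂(ν : Measure X)|) := by
  obtain ⟨x₀⟩ := μ.nonempty
  refine ⟨2 * Metric.diam (Set.univ : Set X), ?_⟩
  rintro _ ⟨⟨f, hf⟩, rfl⟩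
  have hclose (ρ : ProbabilityMeasure X) :=
    abs_integral_sub_integral_le (ρ : Measure X) hf.continuous (continuous_const (y := f x₀))
      fun x => abs_sub_le_diam_of_lipschitzWith_one hf x x₀
  have hμ := hclose μ
  have hν := hclose ν
  simp only [integral_const, probReal_univ, one_smul] at hμ hν
  rw [abs_le] at hμ hν ⊢
  constructor <;> linarith

lemma abs_integral_sub_le_W1 (μ ν : ProbabilityMeasure X) {f : X → ℝ} (hf : LipschitzWith 1 f) :
    |∫ x, f x ∂(μ : Measure X) - ∫ x, f x ∂(ν : Measure X)| ≤ W1 μ ν :=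
  le_ciSup (bddAbove_range_abs_integral_sub μ ν) ⟨f, hf⟩

lemma W1_le {Y : Type*} [PseudoMetricSpace Y] [MeasurableSpace Y] {μ ν : ProbabilityMeasure Y}
    {c : ℝ} (h : ∀ f : Y → ℝ, LipschitzWith 1 f →
      |∫ x, f x ∂(μ : Measure Y) - ∫ x, f x ∂(ν : Measure Y)| ≤ c) : W1 μ ν ≤ c :=
  haveI : Nonempty {f : Y → ℝ // LipschitzWith 1 f} := ⟨⟨fun _ => 0, LipschitzWith.const' 0⟩⟩
  ciSup_le fun f => h f.1 f.2

lemma W1_self {Y : Type*} [PseudoMetricSpace Y] [MeasurableSpace Y] (μ : ProbabilityMeasure Y) :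
    W1 μ μ = 0 := by
  simp [W1]

lemma W1_comm {Y : Type*} [PseudoMetricSpace Y] [MeasurableSpace Y] (μ ν : ProbabilityMeasure Y) :
    W1 μ ν = W1 ν μ := by
  simp only [W1, abs_sub_comm]

lemma W1_nonneg {Y : Type*} [PseudoMetricSpace Y] [MeasurableSpace Y]
    (μ ν : ProbabilityMeasure Y) : 0 ≤ W1 μ ν :=
  Real.iSup_nonneg fun _ => abs_nonneg _

lemma W1_triangle (μ ν ρ : ProbabilityMeasure X) : W1 μ ρ ≤ W1 μ ν + W1 ν ρ :=
  W1_le fun f hf => (abs_sub_le _ (∫ x, f x ∂(ν : Measure X)) _).trans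
    (add_le_add (abs_integral_sub_le_W1 _ _ hf) (abs_integral_sub_le_W1 _ _ hf))

lemma abs_integral_sub_le_mul_W1 (μ ν : ProbabilityMeasure X) {K : ℝ≥0} {f : X → ℝ}
    (hf : LipschitzWith K f) :
    |∫ x, f x ∂(μ : Measure X) - ∫ x, f x ∂(ν : Measure X)| ≤ K * W1 μ ν := by
  obtain ⟨x₀⟩ := μ.nonempty
  rcases eq_or_ne K 0 with rfl | hK
  · have hconst x : f x = f x₀ := by
      simpa [sub_eq_zero] using hf.dist_le_mul x x₀
    simp [hconst]
  · have hscaled : LipschitzWith 1 fun x => (K : ℝ)⁻¹ * f x := by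
      refine LipschitzWith.of_dist_le_mul fun x y => ?_
      rw [Real.dist_eq, ← mul_sub, abs_mul, abs_of_pos (by positivity),
        inv_mul_le_iff₀ (by positivity), NNReal.coe_one, one_mul]
      exact hf.dist_le_mul x y
    have := abs_integral_sub_le_W1 μ ν hscaled
    rwa [integral_const_mul, integral_const_mul, ← mul_sub, abs_mul,
      abs_of_pos (by positivity), inv_mul_le_iff₀ (by positivity)] at this

lemma exists_finset_W1_le [Nonempty X] {ε : ℝ} (hε : 0 < ε) :
    ∃ s : Finset (X →ᵇ ℝ), ∀ μ ν : ProbabilityMeasure X,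
      W1 μ ν ≤ ε + ∑ g ∈ s, |∫ x, g x ∂(μ : Measure X) - ∫ x, g x ∂(ν : Measure X)| := by
  let x₀ := Classical.arbitrary X
  obtain ⟨s, hs⟩ := exists_finset_abs_integral_sub_le (equicontinuous_lipschitz_sub x₀)
    (fun f x => abs_sub_le_diam_of_lipschitzWith_one f.2 x x₀) hε
  refine ⟨s, fun μ ν => W1_le fun f hf => ?_⟩
  rw [← integral_sub_const_sub_integral_sub_const μ ν hf.continuous (f x₀)]
  exact hs ⟨f, hf⟩ μ ν

lemma tendsto_W1_nhds (μ : ProbabilityMeasure X) : Tendsto (W1 · μ) (𝓝 μ) (𝓝 0) := by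
  obtain ⟨x₀⟩ := μ.nonempty
  have hequi := equicontinuous_integral (equicontinuous_lipschitz_sub x₀)
    (fun f x => abs_sub_le_diam_of_lipschitzWith_one f.2 x x₀) μ
  refine Metric.tendsto_nhds.2 fun ε hε => ?_
  filter_upwards [Metric.equicontinuousAt_iff_right.1 hequi _ (half_pos hε)] with ν hν
  rw [Real.dist_eq, sub_zero, abs_of_nonneg (W1_nonneg ν μ), W1_comm]
  refine (W1_le fun f hf => ?_).trans_lt (half_lt_self hε)
  rw [← integral_sub_const_sub_integral_sub_const μ ν hf.continuous (f x₀)]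
  exact (hν ⟨f, hf⟩).le

lemma nhds_eq_comap_W1 (μ : ProbabilityMeasure X) : 𝓝 μ = comap (W1 · μ) (𝓝 0) := by
  refine le_antisymm (tendsto_W1_nhds μ).le_comap ?_
  rw [← tendsto_id', tendsto_iff_forall_lipschitz_integral_tendsto]
  rintro f - ⟨K, hf⟩
  rw [tendsto_iff_dist_tendsto_zero]
  refine squeeze_zero (fun _ => dist_nonneg) (fun ν => abs_integral_sub_le_mul_W1 ν μ hf) ?_
  simpa using (tendsto_comap (f := (W1 · μ)) (x := 𝓝 0)).const_mul (K : ℝ)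

/-- The Wasserstein pseudometric `W1` on the probability measures of a compact space. Its
underlying topology is definitionally the weak topology. -/
@[reducible]
noncomputable def w1PseudoMetricSpace : PseudoMetricSpace (ProbabilityMeasure X) :=
  PseudoMetricSpace.ofDistTopology W1 W1_self W1_comm W1_triangle fun s => by
    have hbasis (μ : ProbabilityMeasure X) : (𝓝 μ).HasBasis (0 < ·) fun ε => {ν | W1 μ ν < ε} := by
      rw [nhds_eq_comap_W1]
      convert Metric.nhds_basis_ball.comap (W1 · μ) using 2 with ε
      ext ν
      simp [W1_comm ν, abs_of_nonneg (W1_nonneg μ ν)]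
    simp only [isOpen_iff_mem_nhds, (hbasis _).mem_iff]
    rfl

end W1

section Mixture

lemma measurable_coe_of_continuous {Z Y : Type*} [TopologicalSpace Z] [MeasurableSpace Z]
    [OpensMeasurableSpace Z] [TopologicalSpace Y] [TopologicalSpace.PseudoMetrizableSpace Y]
    [MeasurableSpace Y] [BorelSpace Y] {κ : Z → ProbabilityMeasure Y} (hκ : Continuous κ) :
    Measurable fun z => (κ z : Measure Y) := by
  let _ : PseudoMetricSpace Y := TopologicalSpace.pseudoMetrizableSpacePseudoMetric Y
  refine Measurable.measure_of_isPiSystem_of_isProbabilityMeasure (S := {s : Set Y | IsClosed s})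
    (borel_eq_generateFrom_isClosed (α := Y) ▸ BorelSpace.measurable_eq) isPiSystem_isClosed ?_
  intro s (hs : IsClosed s)
  have hlim z := tendsto_lintegral_thickenedIndicator_of_isClosed (κ z : Measure Y) hs
    (δs := fun n : ℕ => 1 / ((n : ℝ) + 1)) (fun n => by positivity)
    tendsto_one_div_add_atTop_nhds_zero_nat
  exact measurable_of_tendsto_metrizable (fun n =>
    (ProbabilityMeasure.continuous_iff_forall_continuous_lintegral.1 hκ _).measurable)
    (tendsto_pi_nhds.2 hlim)

lemma integral_bind_of_continuous {Z Y : Type*} [MeasurableSpace Z] [TopologicalSpace Y]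
    [CompactSpace Y] [MeasurableSpace Y] [OpensMeasurableSpace Y] (m : Measure Z)
    [IsProbabilityMeasure m] {κ : Z → Measure Y} [∀ z, IsProbabilityMeasure (κ z)]
    (hκ : Measurable κ) {g : Y → ℝ} (hg : Continuous g) :
    ∫ y, g y ∂(m.bind κ) = ∫ z, ∫ y, g y ∂(κ z) ∂m := by
  have := isProbabilityMeasure_bind hκ.aemeasurable (ae_of_all m fun z => inferInstance)
  have hcomp : m.bind κ = ((⟨κ, hκ⟩ : Kernel Z Y) ∘ₖ Kernel.const Unit m) () := by
    rw [Kernel.comp_apply, Kernel.const_apply, Kernel.coe_mk]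
  rw [hcomp, Kernel.integral_comp (hcomp ▸ integrable_of_continuous (m.bind κ) hg),
    Kernel.const_apply, Kernel.coe_mk]

variable {Z Y : Type*} [MeasurableSpace Z] [MeasurableSpace Y]

open Classical in
/-- The mixture `∫ κ z dm(z)` of a family of probability measures, as a probability measure. Its
value is junk when the `κ z` do not average to a probability measure, which is never the case for
a measurable family. -/
noncomputable def mixture (m : ProbabilityMeasure Z) (κ : Z → ProbabilityMeasure Y) :
    ProbabilityMeasure Y :=
  if h : IsProbabilityMeasure ((m : Measure Z).bind fun z => (κ z : Measure Y)) then ⟨_, h⟩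
  else κ m.nonempty.some

lemma coe_mixture (m : ProbabilityMeasure Z) {κ : Z → ProbabilityMeasure Y}
    (hκ : Measurable fun z => (κ z : Measure Y)) :
    (mixture m κ : Measure Y) = (m : Measure Z).bind fun z => (κ z : Measure Y) := by
  have := isProbabilityMeasure_bind hκ.aemeasurable
    (ae_of_all (m : Measure Z) fun _ => inferInstance)
  exact congrArg ProbabilityMeasure.toMeasure (dif_pos this)

lemma integral_mixture [TopologicalSpace Y] [CompactSpace Y] [OpensMeasurableSpace Y]
    (m : ProbabilityMeasure Z) {κ : Z → ProbabilityMeasure Y}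
    (hκ : Measurable fun z => (κ z : Measure Y)) {g : Y → ℝ} (hg : Continuous g) :
    ∫ y, g y ∂(mixture m κ : Measure Y) = ∫ z, ∫ y, g y ∂(κ z : Measure Y) ∂(m : Measure Z) := by
  rw [coe_mixture m hκ, integral_bind_of_continuous _ hκ hg]

end Mixture

section MixtureUniform

attribute [local instance] w1PseudoMetricSpace

variable {Z Y : Type*} [MetricSpace Z] [CompactSpace Z] [MeasurableSpace Z] [BorelSpace Z]
  [MetricSpace Y] [CompactSpace Y] [MeasurableSpace Y] [BorelSpace Y]

lemma abs_integral_sub_le_dist (μ ν : ProbabilityMeasure Y) {f : Y → ℝ} (hf : LipschitzWith 1 f) :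
    |∫ x, f x ∂(μ : Measure Y) - ∫ x, f x ∂(ν : Measure Y)| ≤ dist μ ν :=
  abs_integral_sub_le_W1 μ ν hf

lemma dist_mixture_le (m : ProbabilityMeasure Z) {κ κ' : Z → ProbabilityMeasure Y}
    (hκ : Continuous κ) (hκ' : Continuous κ') {c : ℝ} (h : ∀ z, dist (κ z) (κ' z) ≤ c) :
    dist (mixture m κ) (mixture m κ') ≤ c := by
  refine W1_le fun f hf => ?_
  have hint := continuous_integral_of_continuous hf.continuous
  rw [integral_mixture m (measurable_coe_of_continuous hκ) hf.continuous,
    integral_mixture m (measurable_coe_of_continuous hκ') hf.continuous]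
  exact abs_integral_sub_integral_le _ (hint.comp hκ) (hint.comp hκ') fun z =>
    (abs_integral_sub_le_dist _ _ hf).trans (h z)

lemma uniformEquicontinuous_mixture_left {ι : Type*} {κ : ι → Z → ProbabilityMeasure Y}
    (hκ : Equicontinuous κ) : UniformEquicontinuous fun i m => mixture m (κ i) := by
  refine CompactSpace.uniformEquicontinuous_of_equicontinuous fun m₀ => ?_
  obtain ⟨z₀⟩ := m₀.nonempty
  let F (j : ι × {f : Y → ℝ // LipschitzWith 1 f}) (z : Z) : ℝ :=
    ∫ y, j.2.1 y ∂(κ j.1 z : Measure Y) - ∫ y, j.2.1 y ∂(κ j.1 z₀ : Measure Y)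
  have hF : Equicontinuous F := fun z => Metric.equicontinuousAt_iff_right.2 fun ε hε => by
    filter_upwards [Metric.equicontinuousAt_iff_right.1 (hκ z) ε hε] with z' hz' j
    rw [Real.dist_eq, sub_sub_sub_cancel_right]
    exact (abs_integral_sub_le_dist _ _ j.2.2).trans_lt (hz' j.1)
  have hbound j z : |F j z| ≤ Metric.diam (Set.univ : Set (ProbabilityMeasure Y)) :=
    (abs_integral_sub_le_dist _ _ j.2.2).trans
      (Metric.dist_le_diam_of_mem isCompact_univ.isBounded (Set.mem_univ _) (Set.mem_univ _))
  have hequi := equicontinuous_integral hF hbound m₀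
  refine Metric.equicontinuousAt_iff_right.2 fun ε hε => ?_
  filter_upwards [Metric.equicontinuousAt_iff_right.1 hequi _ (half_pos hε)] with m hm i
  refine (W1_le fun f hf => ?_).trans_lt (half_lt_self hε)
  have hκi := hκ.continuous i
  have hcont : Continuous fun z => ∫ y, f y ∂(κ i z : Measure Y) :=
    (continuous_integral_of_continuous hf.continuous).comp hκi
  rw [integral_mixture m (measurable_coe_of_continuous hκi) hf.continuous,
    integral_mixture m₀ (measurable_coe_of_continuous hκi) hf.continuous,
    ← integral_sub_const_sub_integral_sub_const m₀ m hcont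
      (∫ y, f y ∂(κ i z₀ : Measure Y))]
  exact (hm (i, ⟨f, hf⟩)).le

lemma uniformEquicontinuous_mixture {ι A : Type*} [PseudoMetricSpace A]
    {κ : ι → Z × A → ProbabilityMeasure Y} (hκ : UniformEquicontinuous κ) :
    UniformEquicontinuous fun i (x : ProbabilityMeasure Z × A) =>
      mixture x.1 fun z => κ i (z, x.2) := by
  have hsection : Equicontinuous fun (j : ι × A) z => κ j.1 (z, j.2) := fun z =>
    Metric.equicontinuousAt_iff.2 fun ε hε => by
      obtain ⟨δ, hδ, h⟩ := Metric.uniformEquicontinuous_iff.1 hκ ε hε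
      exact ⟨δ, hδ, fun z' hz' j => h _ _ (by simpa [Prod.dist_eq, dist_comm z] using hz') _⟩
  refine Metric.uniformEquicontinuous_iff.2 fun ε hε => ?_
  obtain ⟨δ₁, hδ₁, hmeasure⟩ := Metric.uniformEquicontinuous_iff.1
    (uniformEquicontinuous_mixture_left hsection) _ (half_pos hε)
  obtain ⟨δ₂, hδ₂, hkernel⟩ := Metric.uniformEquicontinuous_iff.1 hκ _ (half_pos hε)
  refine ⟨min δ₁ δ₂, lt_min hδ₁ hδ₂, fun ⟨m, a⟩ ⟨m', a'⟩ hdist i => ?_⟩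
  rw [Prod.dist_eq, lt_min_iff, max_lt_iff, max_lt_iff] at hdist
  calc dist (mixture m fun z => κ i (z, a)) (mixture m' fun z => κ i (z, a'))
      ≤ dist (mixture m fun z => κ i (z, a)) (mixture m' fun z => κ i (z, a))
        + dist (mixture m' fun z => κ i (z, a)) (mixture m' fun z => κ i (z, a')) :=
        dist_triangle _ _ _
    _ < ε / 2 + ε / 2 := by
        refine add_lt_add_of_lt_of_le (hmeasure m m' hdist.1.1 (i, a)) ?_
        refine dist_mixture_le m' (hsection.continuous (i, a)) (hsection.continuous (i, a'))
          fun z => (hkernel _ _ ?_ i).le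
        simpa [Prod.dist_eq] using hdist.2.2
    _ = ε := add_halves ε

end MixtureUniform

section UniformEquicontinuous

variable {ι A B C : Type*} [UniformSpace A] [UniformSpace B] [UniformSpace C]

lemma uniformEquicontinuous_const {f : A → B} (hf : UniformContinuous f) :
    UniformEquicontinuous fun _ : ι => f := fun W hW => by
  filter_upwards [hf hW] with a ha _ using ha

lemma uniformEquicontinuous_comp_uniformContinuous {F : ι → B → C} (hF : UniformEquicontinuous F)
    {φ : A → B} (hφ : UniformContinuous φ) : UniformEquicontinuous fun i a => F i (φ a) :=
  uniformEquicontinuous_iff_uniformContinuous.2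
    ((uniformEquicontinuous_iff_uniformContinuous.1 hF).comp hφ)

lemma uniformEquicontinuous_apply_prodMk {Ψ : B × A → C} (hΨ : UniformContinuous Ψ)
    {F : ι → A → B} (hF : UniformEquicontinuous F) :
    UniformEquicontinuous fun i a => Ψ (F i a, a) := fun W hW => by
  obtain ⟨V, hV, V', hV', hsub⟩ := entourageProd_subset (hΨ hW)
  filter_upwards [hF V hV, hV'] with ⟨a, a'⟩ hFV hV' i
  exact hsub (a := ((F i a, a), (F i a', a'))) ⟨hFV i, hV'⟩

end UniformEquicontinuous

section MeanField

attribute [local instance] w1PseudoMetricSpace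

variable {X U : Type*} [MeasurableSpace X] [MeasurableSpace U]

/-- The law of the next state of an agent in state `x` when the mean field is `μ` and the agent
samples its action from `q x μ`. -/
noncomputable def agentKernel (p : X → U → ProbabilityMeasure X → ProbabilityMeasure X)
    (q : X → ProbabilityMeasure X → ProbabilityMeasure U) (x : X) (μ : ProbabilityMeasure X) :
    ProbabilityMeasure X :=
  mixture (q x μ) fun u => p x u μ

/-- One step of the limiting mean-field dynamics under the decision rule `q`. -/
noncomputable def meanFieldStep (p : X → U → ProbabilityMeasure X → ProbabilityMeasure X)
    (q : X → ProbabilityMeasure X → ProbabilityMeasure U) (μ : ProbabilityMeasure X) :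
    ProbabilityMeasure X :=
  mixture μ fun x => agentKernel p q x μ

variable [MetricSpace X] [CompactSpace X] [BorelSpace X] [MetricSpace U] [CompactSpace U]
  [BorelSpace U] {p : X → U → ProbabilityMeasure X → ProbabilityMeasure X}
  (hp : Continuous fun z : X × U × ProbabilityMeasure X => p z.1 z.2.1 z.2.2)

include hp

lemma uniformEquicontinuous_agentKernel {ι : Type*}
    {q : ι → X → ProbabilityMeasure X → ProbabilityMeasure U}
    (hq : UniformEquicontinuous fun i (z : X × ProbabilityMeasure X) => q i z.1 z.2) :
    UniformEquicontinuous fun i (z : X × ProbabilityMeasure X) => agentKernel p (q i) z.1 z.2 := by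
  have hreorder : Continuous fun w : U × X × ProbabilityMeasure X => p w.2.1 w.1 w.2.2 :=
    hp.comp (g := fun z : X × U × ProbabilityMeasure X => p z.1 z.2.1 z.2.2)
      (f := fun w : U × X × ProbabilityMeasure X => (w.2.1, w.1, w.2.2)) (by fun_prop)
  have hkernel : UniformEquicontinuous fun (_ : Unit) (w : U × X × ProbabilityMeasure X) =>
      p w.2.1 w.1 w.2.2 :=
    uniformEquicontinuous_const (CompactSpace.uniformContinuous_of_continuous hreorder)
  exact uniformEquicontinuous_apply_prodMk
    ((uniformEquicontinuous_mixture hkernel).uniformContinuous ()) hq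

lemma uniformEquicontinuous_meanFieldStep {ι : Type*}
    {q : ι → X → ProbabilityMeasure X → ProbabilityMeasure U}
    (hq : UniformEquicontinuous fun i (z : X × ProbabilityMeasure X) => q i z.1 z.2) :
    UniformEquicontinuous fun i => meanFieldStep p (q i) := by
  have hmixture : UniformEquicontinuous fun i (z : ProbabilityMeasure X × ProbabilityMeasure X) =>
      mixture z.1 fun x => agentKernel p (q i) x z.2 :=
    uniformEquicontinuous_mixture (κ := fun i z => agentKernel p (q i) z.1 z.2)
      (uniformEquicontinuous_agentKernel hp hq)
  have hdiag : UniformContinuous fun μ : ProbabilityMeasure X => (μ, μ) :=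
    uniformContinuous_id.prodMk uniformContinuous_id
  exact (uniformEquicontinuous_comp_uniformContinuous hmixture hdiag :)

end MeanField

section LawOfLargeNumbers

lemma integral_abs_sub_integral_le_sqrt_variance {Ω : Type*} [MeasurableSpace Ω] {P : Measure Ω}
    [IsProbabilityMeasure P] {Y : Ω → ℝ} (hY : MemLp Y 2 P) :
    ∫ ω, |Y ω - P[Y]| ∂P ≤ √Var[Y; P] := by
  have hcentered : MemLp (fun ω => |Y ω - P[Y]|) 2 P := (hY.sub (memLp_const _)).norm
  refine Real.le_sqrt_of_sq_le ?_
  have hnonneg := variance_nonneg (fun ω => |Y ω - P[Y]|) P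
  rw [variance_eq_sub hcentered, sub_nonneg] at hnonneg
  rw [variance_eq_integral hY.aemeasurable]
  simpa using hnonneg

lemma integral_abs_sum_sub_le {ι : Type*} [Fintype ι] {Ω : ι → Type*}
    [∀ i, MeasurableSpace (Ω i)] (P : ∀ i, Measure (Ω i)) [∀ i, IsProbabilityMeasure (P i)]
    {Y : ∀ i, Ω i → ℝ} (hY : ∀ i, Measurable (Y i)) {C : ℝ} (hC : ∀ i ω, |Y i ω| ≤ C) :
    ∫ ω, |∑ i, Y i (ω i) - ∑ i, ∫ a, Y i a ∂P i| ∂Measure.pi P ≤ √(Fintype.card ι * C ^ 2) := by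
  have hmem i : MemLp (Y i) 2 (P i) :=
    MemLp.of_bound (hY i).aestronglyMeasurable C (ae_of_all _ (hC i))
  have hmem_eval i : MemLp (fun ω => Y i (ω i)) 2 (Measure.pi P) :=
    (hmem i).comp_measurePreserving (measurePreserving_eval P i)
  have hmean : ∫ ω, ∑ i, Y i (ω i) ∂Measure.pi P = ∑ i, ∫ a, Y i a ∂P i := by
    rw [integral_finsetSum _ fun i _ => (hmem_eval i).integrable one_le_two]
    exact Finset.sum_congr rfl fun i _ => integral_comp_eval (hY i).aestronglyMeasurable
  have hvar : Var[fun ω => ∑ i, Y i (ω i); Measure.pi P] ≤ Fintype.card ι * C ^ 2 := by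
    have hsum := variance_sum_pi hmem
    rw [Finset.sum_fn] at hsum
    rw [hsum, ← nsmul_eq_mul, ← Finset.card_univ]
    refine Finset.sum_le_card_nsmul _ _ _ fun i _ => ?_
    simpa using variance_le_sq_of_bounded (ae_of_all (P i) fun ω => abs_le.1 (hC i ω))
      (hY i).aemeasurable
  rw [← hmean]
  exact (integral_abs_sub_integral_le_sqrt_variance
    (memLp_finsetSum _ fun i _ => hmem_eval i)).trans (Real.sqrt_le_sqrt hvar)

lemma coe_emp {X : Type*} [MeasurableSpace X] [Nonempty X] {N : ℕ} (hN : N ≠ 0) (x : Fin N → X) :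
    (emp N x : Measure X) = (N : ℝ≥0∞)⁻¹ • ∑ i, Measure.dirac (x i) := by
  simp [emp, hN]

variable {X : Type*} [PseudoMetricSpace X] [CompactSpace X] [MeasurableSpace X] [BorelSpace X]
  [Nonempty X]

lemma integral_emp {N : ℕ} (hN : N ≠ 0) (x : Fin N → X) {g : X → ℝ} (hg : Continuous g) :
    ∫ y, g y ∂(emp N x : Measure X) = (N : ℝ)⁻¹ * ∑ i, g (x i) := by
  rw [coe_emp hN, integral_smul_measure,
    integral_finsetSum_measure fun i _ => integrable_of_continuous _ hg]
  simp [integral_dirac' _ _ hg.stronglyMeasurable]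

lemma continuous_emp (N : ℕ) : Continuous (emp N : (Fin N → X) → ProbabilityMeasure X) := by
  rcases eq_or_ne N 0 with rfl | hN
  · exact continuous_of_const fun x y => by rw [Subsingleton.elim x y]
  · refine ProbabilityMeasure.continuous_iff_forall_continuous_integral.2 fun g => ?_
    simp only [integral_emp hN _ g.continuous]
    fun_prop

lemma eventually_integral_abs_integral_emp_sub_le {g : X → ℝ} (hg : Continuous g) {ε : ℝ}
    (hε : 0 < ε) :
    ∀ᶠ N : ℕ in atTop, ∀ ν : Fin N → ProbabilityMeasure X,
      ∫ y, |∫ x, g x ∂(emp N y : Measure X) - (N : ℝ)⁻¹ * ∑ i, ∫ x, g x ∂(ν i : Measure X)|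
        ∂(Measure.pi fun i => (ν i : Measure X)) ≤ ε := by
  obtain ⟨C, hC⟩ := isCompact_univ.exists_bound_of_continuousOn hg.continuousOn
  have hrate : Tendsto (fun N : ℕ => C / √N) atTop (𝓝 0) :=
    tendsto_const_nhds.div_atTop (Real.tendsto_sqrt_atTop.comp tendsto_natCast_atTop_atTop)
  filter_upwards [hrate.eventually (ge_mem_nhds hε), eventually_ne_atTop 0] with N hN hN0 ν
  obtain ⟨x₀⟩ := ‹Nonempty X›
  have hC0 : 0 ≤ C := (norm_nonneg _).trans (hC x₀ (Set.mem_univ x₀))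
  have hsum := integral_abs_sum_sub_le (fun i => (ν i : Measure X)) (fun _ => hg.measurable)
    fun _ x => hC x (Set.mem_univ x)
  rw [Fintype.card_fin, Real.sqrt_mul N.cast_nonneg, Real.sqrt_sq hC0] at hsum
  simp only [integral_emp hN0 _ hg, ← mul_sub, abs_mul, integral_const_mul, abs_inv, Nat.abs_cast]
  calc (N : ℝ)⁻¹ * _ ≤ (N : ℝ)⁻¹ * (√N * C) := by gcongr
    _ = C / √N := by
        rw [inv_mul_eq_div, div_eq_div_iff (by positivity) (by positivity), mul_right_comm,
          Real.mul_self_sqrt N.cast_nonneg, mul_comm]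
    _ ≤ ε := hN

attribute [local instance] w1PseudoMetricSpace

lemma eventually_integral_dist_emp_le {ε : ℝ} (hε : 0 < ε) :
    ∀ᶠ N : ℕ in atTop, ∀ (ν : Fin N → ProbabilityMeasure X) (ρ : ProbabilityMeasure X),
      (∀ g : X → ℝ, Continuous g →
        ∫ x, g x ∂(ρ : Measure X) = (N : ℝ)⁻¹ * ∑ i, ∫ x, g x ∂(ν i : Measure X)) →
      ∫ y, dist (emp N y) ρ ∂(Measure.pi fun i => (ν i : Measure X)) ≤ ε := by
  obtain ⟨s, hs⟩ := exists_finset_W1_le (X := X) (half_pos hε)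
  have hδ : 0 < ε / 2 / (s.card + 1) := by positivity
  filter_upwards [s.eventually_all.2 fun g _ =>
    eventually_integral_abs_integral_emp_sub_le g.continuous hδ] with N hN ν ρ hρ
  have hcont (g : X →ᵇ ℝ) :
      Continuous fun y : Fin N → X =>
        |∫ x, g x ∂(emp N y : Measure X) - ∫ x, g x ∂(ρ : Measure X)| :=
    (((continuous_integral_of_continuous g.continuous).comp (continuous_emp N)).sub
      continuous_const).abs
  calc ∫ y, dist (emp N y) ρ ∂(Measure.pi fun i => (ν i : Measure X))
      ≤ ∫ y, (ε / 2 + ∑ g ∈ s, |∫ x, g x ∂(emp N y : Measure X) - ∫ x, g x ∂(ρ : Measure X)|)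
          ∂(Measure.pi fun i => (ν i : Measure X)) :=
        integral_mono (integrable_of_continuous _ ((continuous_emp N).dist continuous_const))
          (integrable_of_continuous _
            (continuous_const.add (continuous_finsetSum _ fun g _ => hcont g)))
          fun y => hs (emp N y) ρ
    _ = ε / 2 + ∑ g ∈ s, ∫ y, |∫ x, g x ∂(emp N y : Measure X) - ∫ x, g x ∂(ρ : Measure X)|
          ∂(Measure.pi fun i => (ν i : Measure X)) := by
        rw [integral_const_add_of_continuous _ _ (continuous_finsetSum _ fun g _ => hcont g),
          integral_finsetSum _ fun g _ => integrable_of_continuous _ (hcont g)]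
    _ ≤ ε / 2 + ∑ _g ∈ s, ε / 2 / (s.card + 1) := by
        gcongr with g hg
        rw [hρ g g.continuous]
        exact hN g hg ν
    _ ≤ ε := by
        rw [Finset.sum_const, nsmul_eq_mul, mul_div_left_comm]
        have : (s.card : ℝ) / (s.card + 1) ≤ 1 := (div_le_one (by positivity)).2 (by linarith)
        nlinarith

end LawOfLargeNumbers

section Concentration

lemma abs_integral_sub_le_integral_dist {Ω : Type*} [TopologicalSpace Ω] [CompactSpace Ω]
    [MeasurableSpace Ω] [OpensMeasurableSpace Ω] (P : Measure Ω) [IsProbabilityMeasure P]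
    {f : Ω → ℝ} (hf : Continuous f) (c : ℝ) : |∫ ω, f ω ∂P - c| ≤ ∫ ω, dist (f ω) c ∂P := by
  have := abs_integral_le_integral_abs (μ := P) (f := fun ω => f ω - c)
  rwa [integral_sub (integrable_of_continuous P hf) (integrable_const c), integral_const,
    probReal_univ, one_smul] at this

lemma integral_dist_triangle {Ω α : Type*} [TopologicalSpace Ω] [CompactSpace Ω]
    [MeasurableSpace Ω] [OpensMeasurableSpace Ω] [PseudoMetricSpace α] (P : Measure Ω)
    [IsProbabilityMeasure P] {Y : Ω → α} (hY : Continuous Y) (a b : α) :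
    ∫ ω, dist (Y ω) b ∂P ≤ ∫ ω, dist (Y ω) a ∂P + dist a b := by
  have hdist c : Continuous fun ω => dist (Y ω) c := hY.dist continuous_const
  rw [add_comm, ← integral_const_add_of_continuous _ _ (hdist a)]
  refine integral_mono (integrable_of_continuous _ (hdist b))
    (integrable_of_continuous _ (continuous_const.add (hdist a))) fun ω => ?_
  rw [add_comm (dist a b)]
  exact dist_triangle _ _ _

lemma exists_dist_le_add_mul {ι α β : Type*} [PseudoMetricSpace α] [PseudoMetricSpace β]
    {F : ι → α → β} (hF : UniformEquicontinuous F) {C : ℝ} (hC : ∀ i x y, dist (F i x) (F i y) ≤ C)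
    {ε : ℝ} (hε : 0 < ε) : ∃ K : ℝ, ∀ i x y, dist (F i x) (F i y) ≤ ε + K * dist x y := by
  obtain ⟨δ, hδ, h⟩ := Metric.uniformEquicontinuous_iff.1 hF ε hε
  refine ⟨|C| / δ, fun i x y => ?_⟩
  rcases lt_or_ge (dist x y) δ with hxy | hxy
  · exact (h x y hxy i).le.trans (le_add_of_nonneg_right (by positivity))
  · calc dist (F i x) (F i y) ≤ |C| := (hC i x y).trans (le_abs_self C)
      _ = |C| / δ * δ := (div_mul_cancel₀ _ hδ.ne').symm
      _ ≤ |C| / δ * dist x y := by gcongr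
      _ ≤ ε + |C| / δ * dist x y := le_add_of_nonneg_left hε.le

lemma tendsto_integral_dist_comp {κ α β : Type*} [PseudoMetricSpace α] [PseudoMetricSpace β]
    {Ω : κ → Type*} [∀ k, TopologicalSpace (Ω k)] [∀ k, CompactSpace (Ω k)]
    [∀ k, MeasurableSpace (Ω k)] [∀ k, OpensMeasurableSpace (Ω k)] (P : ∀ k, Measure (Ω k))
    [∀ k, IsProbabilityMeasure (P k)] {Y : ∀ k, Ω k → α} (hY : ∀ k, Continuous (Y k)) {a : κ → α}
    {F : κ → α → β} (hF : UniformEquicontinuous F) {C : ℝ} (hC : ∀ k x y, dist (F k x) (F k y) ≤ C)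
    {l : Filter κ} (h : Tendsto (fun k => ∫ ω, dist (Y k ω) (a k) ∂P k) l (𝓝 0)) :
    Tendsto (fun k => ∫ ω, dist (F k (Y k ω)) (F k (a k)) ∂P k) l (𝓝 0) := by
  refine Metric.tendsto_nhds.2 fun ε hε => ?_
  obtain ⟨K, hK⟩ := exists_dist_le_add_mul hF hC (half_pos hε)
  have hlim : Tendsto (fun k => K * ∫ ω, dist (Y k ω) (a k) ∂P k) l (𝓝 0) := by
    simpa using h.const_mul K
  filter_upwards [hlim.eventually (gt_mem_nhds (half_pos hε))] with k hk
  have hdist : Continuous fun ω => dist (Y k ω) (a k) := (hY k).dist continuous_const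
  have hdistF : Continuous fun ω => dist (F k (Y k ω)) (F k (a k)) :=
    ((hF.uniformContinuous k).continuous.comp (hY k)).dist continuous_const
  rw [Real.dist_eq, sub_zero, abs_of_nonneg (integral_nonneg fun _ => dist_nonneg)]
  calc ∫ ω, dist (F k (Y k ω)) (F k (a k)) ∂P k
      ≤ ∫ ω, (ε / 2 + K * dist (Y k ω) (a k)) ∂P k :=
        integral_mono (integrable_of_continuous _ hdistF)
          (integrable_of_continuous _ (continuous_const.add (hdist.const_mul K)))
          fun ω => hK k _ _
    _ = ε / 2 + K * ∫ ω, dist (Y k ω) (a k) ∂P k := by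
        rw [integral_const_add_of_continuous _ _ (hdist.const_mul K), integral_const_mul]
    _ < ε := by linarith

lemma tendsto_tsum_pow_mul_of_bounded {κ : Type*} {l : Filter κ} {γ : ℝ} (hγ : |γ| < 1)
    {a : κ → ℕ → ℝ} {C : ℝ} (hC : ∀ k t, |a k t| ≤ C) (h : ∀ t, Tendsto (a · t) l (𝓝 0)) :
    Tendsto (fun k => ∑' t, γ ^ t * a k t) l (𝓝 0) := by
  have hbound : Summable fun t => |γ| ^ t * C :=
    (summable_geometric_of_lt_one (abs_nonneg γ) hγ).mul_right C
  rw [← tsum_zero (β := ℕ)]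
  refine tendsto_tsum_of_dominated_convergence hbound
    (fun t => by simpa using (h t).const_mul (γ ^ t)) (Eventually.of_forall fun k t => ?_)
  rw [Real.norm_eq_abs, abs_mul, abs_pow]
  exact mul_le_mul_of_nonneg_left (hC k t) (by positivity)

lemma summable_pow_mul_of_bounded {γ : ℝ} (hγ : |γ| < 1) {a : ℕ → ℝ} {C : ℝ}
    (hC : ∀ t, |a t| ≤ C) : Summable fun t => γ ^ t * a t := by
  refine .of_norm_bounded ((summable_geometric_of_lt_one (abs_nonneg γ) hγ).mul_right C)
    fun t => ?_
  rw [Real.norm_eq_abs, abs_mul, abs_pow]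
  exact mul_le_mul_of_nonneg_left (hC t) (by positivity)

end Concentration

section NAgent

attribute [local instance] w1PseudoMetricSpace

variable {X U : Type*} [MetricSpace X] [CompactSpace X] [MeasurableSpace X] [BorelSpace X]
  [MetricSpace U] [CompactSpace U] [MeasurableSpace U] [BorelSpace U]
  {p : X → U → ProbabilityMeasure X → ProbabilityMeasure X}
  (hp : Continuous fun z : X × U × ProbabilityMeasure X => p z.1 z.2.1 z.2.2)

section DecisionRule

variable {q : X → ProbabilityMeasure X → ProbabilityMeasure U}
  (hq : Continuous fun z : X × ProbabilityMeasure X => q z.1 z.2)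

omit [CompactSpace X] [CompactSpace U] in
include hp in
lemma coe_agentKernel (x : X) (μ : ProbabilityMeasure X) :
    (agentKernel p q x μ : Measure X) =
      (q x μ : Measure U).bind fun u => (p x u μ : Measure X) :=
  coe_mixture _ (measurable_coe_of_continuous
    (hp.comp (f := fun u => (x, u, μ)) (by fun_prop)))

include hp hq

lemma continuous_agentKernel :
    Continuous fun z : X × ProbabilityMeasure X => agentKernel p q z.1 z.2 :=
  ((uniformEquicontinuous_agentKernel hp (ι := Unit) (q := fun _ => q)
    (uniformEquicontinuous_const
      (CompactSpace.uniformContinuous_of_continuous hq))).uniformContinuous ()).continuous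

lemma continuous_agentKernel_left (μ : ProbabilityMeasure X) :
    Continuous fun x => agentKernel p q x μ :=
  (continuous_agentKernel hp hq).comp (f := fun x => (x, μ)) (by fun_prop)

lemma continuous_meanFieldStep : Continuous (meanFieldStep p q) :=
  ((uniformEquicontinuous_meanFieldStep hp (ι := Unit) (q := fun _ => q)
    (uniformEquicontinuous_const
      (CompactSpace.uniformContinuous_of_continuous hq))).uniformContinuous ()).continuous

lemma coe_meanFieldStep (μ : ProbabilityMeasure X) :
    (meanFieldStep p q μ : Measure X) = (μ : Measure X).bind fun x =>
      (q x μ : Measure U).bind fun u => (p x u μ : Measure X) := by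
  rw [meanFieldStep,
    coe_mixture μ (measurable_coe_of_continuous (continuous_agentKernel_left hp hq μ))]
  simp only [coe_agentKernel hp]

variable [Nonempty X]

lemma integral_meanFieldStep_emp {N : ℕ} (hN : N ≠ 0) (x : Fin N → X) {g : X → ℝ}
    (hg : Continuous g) :
    ∫ y, g y ∂(meanFieldStep p q (emp N x) : Measure X) =
      (N : ℝ)⁻¹ * ∑ i, ∫ y, g y ∂(agentKernel p q (x i) (emp N x) : Measure X) := by
  have hkernel := continuous_agentKernel_left hp hq (emp N x)
  rw [meanFieldStep, integral_mixture _ (measurable_coe_of_continuous hkernel) hg,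
    integral_emp hN x (g := fun z => ∫ y, g y ∂(agentKernel p q z (emp N x) : Measure X))
      ((continuous_integral_of_continuous hg).comp hkernel)]

end DecisionRule

variable [Nonempty X]

/-- The transition kernel of the `N`-agent system under the decision rule `q`: given the joint state
`x`, the agents move independently, each according to its own `agentKernel`. -/
noncomputable def jointKernel (p : X → U → ProbabilityMeasure X → ProbabilityMeasure X)
    (q : X → ProbabilityMeasure X → ProbabilityMeasure U) (N : ℕ) (x : Fin N → X) :
    ProbabilityMeasure (Fin N → X) :=
  ProbabilityMeasure.pi fun i => agentKernel p q (x i) (emp N x)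

include hp

lemma continuous_jointKernel {q : X → ProbabilityMeasure X → ProbabilityMeasure U}
    (hq : Continuous fun z : X × ProbabilityMeasure X => q z.1 z.2) (N : ℕ) :
    Continuous (jointKernel p q N) := by
  have hagent i : Continuous fun x : Fin N → X => agentKernel p q (x i) (emp N x) :=
    (continuous_agentKernel hp hq).comp (f := fun x : Fin N → X => (x i, emp N x))
      ((continuous_apply i).prodMk (continuous_emp N))
  exact ProbabilityMeasure.continuous_pi.comp (continuous_pi hagent)

lemma measurable_jointKernel {q : X → ProbabilityMeasure X → ProbabilityMeasure U}
    (hq : Continuous fun z : X × ProbabilityMeasure X => q z.1 z.2) (N : ℕ) :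
    Measurable fun x => (jointKernel p q N x : Measure (Fin N → X)) :=
  measurable_coe_of_continuous (continuous_jointKernel hp hq N)

lemma eventually_integral_dist_emp_jointKernel_le {ε : ℝ} (hε : 0 < ε) :
    ∀ᶠ N : ℕ in atTop, ∀ q : X → ProbabilityMeasure X → ProbabilityMeasure U,
      (Continuous fun z : X × ProbabilityMeasure X => q z.1 z.2) → ∀ x,
      ∫ y, dist (emp N y) (meanFieldStep p q (emp N x))
        ∂(jointKernel p q N x : Measure (Fin N → X)) ≤ ε := by
  filter_upwards [eventually_integral_dist_emp_le (X := X) hε, eventually_ne_atTop 0]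
    with N hN hN0 q hq x
  exact hN _ _ fun g hg => integral_meanFieldStep_emp hp hq hN0 x hg

omit [CompactSpace X] [CompactSpace U] in
lemma mfcLawN_succ (q : ℕ → X → ProbabilityMeasure X → ProbabilityMeasure U)
    (μ0 : ProbabilityMeasure X) (N t : ℕ) :
    mfcLawN p q μ0 N (t + 1) = (mfcLawN p q μ0 N t).bind fun x =>
      (jointKernel p (q t) N x : Measure (Fin N → X)) := by
  simp only [mfcLawN, jointKernel, ProbabilityMeasure.toMeasure_pi, coe_agentKernel hp]

section Policy

variable {q : ℕ → X → ProbabilityMeasure X → ProbabilityMeasure U}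
  (hq : ∀ t, Continuous fun z : X × ProbabilityMeasure X => q t z.1 z.2)

include hq

lemma isProbabilityMeasure_mfcLawN (μ0 : ProbabilityMeasure X) (N t : ℕ) :
    IsProbabilityMeasure (mfcLawN p q μ0 N t) := by
  induction t with
  | zero => rw [mfcLawN]; infer_instance
  | succ t ih =>
    rw [mfcLawN_succ hp]
    exact isProbabilityMeasure_bind (measurable_jointKernel hp (hq t) N).aemeasurable
      (ae_of_all _ fun _ => inferInstance)

lemma integral_dist_emp_mfcLawN_succ_le (μ0 : ProbabilityMeasure X) {N t : ℕ} {η : ℝ}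
    (hη : ∀ x, ∫ y, dist (emp N y) (meanFieldStep p (q t) (emp N x))
      ∂(jointKernel p (q t) N x : Measure (Fin N → X)) ≤ η) (μ : ProbabilityMeasure X) :
    ∫ y, dist (emp N y) μ ∂(mfcLawN p q μ0 N (t + 1)) ≤
      η + ∫ x, dist (meanFieldStep p (q t) (emp N x)) μ ∂(mfcLawN p q μ0 N t) := by
  have := isProbabilityMeasure_mfcLawN hp hq μ0 N t
  have hemp (ρ : ProbabilityMeasure X) : Continuous fun y : Fin N → X => dist (emp N y) ρ :=
    (continuous_emp N).dist continuous_const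
  have hstep : Continuous fun x : Fin N → X => dist (meanFieldStep p (q t) (emp N x)) μ :=
    ((continuous_meanFieldStep hp (hq t)).comp (continuous_emp N)).dist continuous_const
  rw [mfcLawN_succ hp, integral_bind_of_continuous _ (measurable_jointKernel hp (hq t) N) (hemp μ)]
  calc ∫ x, ∫ y, dist (emp N y) μ ∂(jointKernel p (q t) N x : Measure (Fin N → X))
        ∂(mfcLawN p q μ0 N t)
      ≤ ∫ x, (η + dist (meanFieldStep p (q t) (emp N x)) μ) ∂(mfcLawN p q μ0 N t) := by
        refine integral_mono (integrable_of_continuous _ ((continuous_integral_of_continuous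
          (hemp μ)).comp (continuous_jointKernel hp (hq t) N)))
          (integrable_of_continuous _ (continuous_const.add hstep)) fun x => ?_
        exact (integral_dist_triangle _ (continuous_emp N) _ _).trans
          (add_le_add_left (hη x) _)
    _ = η + ∫ x, dist (meanFieldStep p (q t) (emp N x)) μ ∂(mfcLawN p q μ0 N t) :=
        integral_const_add_of_continuous _ _ hstep

end Policy

theorem tendsto_integral_dist_emp_mfcLawN {ι : Type*}
    {q : ι → ℕ → X → ProbabilityMeasure X → ProbabilityMeasure U}
    (hq : ∀ t, UniformEquicontinuous fun i (z : X × ProbabilityMeasure X) => q i t z.1 z.2)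
    {μ0 : ProbabilityMeasure X} {m : ι → ℕ → ProbabilityMeasure X} (hm0 : ∀ i, m i 0 = μ0)
    (hm : ∀ i t, m i (t + 1) = meanFieldStep p (q i t) (m i t)) (t : ℕ) :
    Tendsto (fun k : ℕ × ι => ∫ x, dist (emp k.1 x) (m k.2 t) ∂(mfcLawN p (q k.2) μ0 k.1 t))
      (atTop ×ˢ ⊤) (𝓝 0) := by
  have hqc i t := ((hq t).uniformContinuous i).continuous
  have hprob N i := isProbabilityMeasure_mfcLawN hp (hqc i) μ0 N
  induction t with
  | zero =>
    refine Metric.tendsto_nhds.2 fun ε hε => ?_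
    filter_upwards [(eventually_integral_dist_emp_le (X := X) (half_pos hε)).prod_inl ⊤,
      (eventually_ne_atTop 0).prod_inl ⊤] with ⟨N, i⟩ hN (hN0 : N ≠ 0)
    rw [Real.dist_eq, sub_zero, abs_of_nonneg (integral_nonneg fun _ => dist_nonneg)]
    refine (hN (fun _ => μ0) (m i 0) fun g _ => ?_).trans_lt (half_lt_self hε)
    simp [hm0, hN0]
  | succ t ih =>
    have hstep := tendsto_integral_dist_comp (fun k : ℕ × ι => mfcLawN p (q k.2) μ0 k.1 t)
      (fun k => continuous_emp k.1) ((uniformEquicontinuous_meanFieldStep hp (hq t)).comp Prod.snd)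
      (fun _ _ _ => Metric.dist_le_diam_of_mem isCompact_univ.isBounded (Set.mem_univ _)
        (Set.mem_univ _)) ih
    refine Metric.tendsto_nhds.2 fun ε hε => ?_
    filter_upwards [(eventually_integral_dist_emp_jointKernel_le hp (half_pos hε)).prod_inl ⊤,
      hstep.eventually (gt_mem_nhds (half_pos hε))] with ⟨N, i⟩ hN hlt
    rw [Real.dist_eq, sub_zero, abs_of_nonneg (integral_nonneg fun _ => dist_nonneg)]
    have hle := integral_dist_emp_mfcLawN_succ_le hp (hqc i) μ0 (hN (q i t) (hqc i t))
      (m i (t + 1))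
    simp only [hm, Function.comp_apply] at hle hlt ⊢
    linarith

lemma tendsto_integral_emp_sub_mfcLawN {ι : Type*}
    {q : ι → ℕ → X → ProbabilityMeasure X → ProbabilityMeasure U}
    (hq : ∀ t, UniformEquicontinuous fun i (z : X × ProbabilityMeasure X) => q i t z.1 z.2)
    {μ0 : ProbabilityMeasure X} {m : ι → ℕ → ProbabilityMeasure X} (hm0 : ∀ i, m i 0 = μ0)
    (hm : ∀ i t, m i (t + 1) = meanFieldStep p (q i t) (m i t)) {r : ProbabilityMeasure X → ℝ}
    (hr : Continuous r) (t : ℕ) :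
    Tendsto (fun k : ℕ × ι =>
      ∫ x, r (emp k.1 x) ∂(mfcLawN p (q k.2) μ0 k.1 t) - r (m k.2 t)) (atTop ×ˢ ⊤) (𝓝 0) := by
  have hprob N i := isProbabilityMeasure_mfcLawN hp
    (fun t => ((hq t).uniformContinuous i).continuous) μ0 N t
  have hr_unif : UniformEquicontinuous fun _ : ℕ × ι => r :=
    uniformEquicontinuous_const (CompactSpace.uniformContinuous_of_continuous hr)
  obtain ⟨C, hC⟩ := Metric.isBounded_iff.1 (isCompact_range hr).isBounded
  refine squeeze_zero_norm (fun k => ?_) (tendsto_integral_dist_comp _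
    (fun k : ℕ × ι => continuous_emp k.1) hr_unif (fun _ μ ν => hC ⟨μ, rfl⟩ ⟨ν, rfl⟩)
    (tendsto_integral_dist_emp_mfcLawN hp hq hm0 hm t))
  exact abs_integral_sub_le_integral_dist _ (hr.comp (continuous_emp k.1)) _

theorem tendstoUniformly_tsum_mfcLawN {ι : Type*}
    {q : ι → ℕ → X → ProbabilityMeasure X → ProbabilityMeasure U}
    (hq : ∀ t, UniformEquicontinuous fun i (z : X × ProbabilityMeasure X) => q i t z.1 z.2)
    {μ0 : ProbabilityMeasure X} {m : ι → ℕ → ProbabilityMeasure X} (hm0 : ∀ i, m i 0 = μ0)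
    (hm : ∀ i t, m i (t + 1) = meanFieldStep p (q i t) (m i t)) {r : ProbabilityMeasure X → ℝ}
    (hr : Continuous r) {γ : ℝ} (hγ : |γ| < 1) :
    TendstoUniformly (fun N i => ∑' t, γ ^ t * ∫ x, r (emp N x) ∂(mfcLawN p (q i) μ0 N t))
      (fun i => ∑' t, γ ^ t * r (m i t)) atTop := by
  have hprob N i := isProbabilityMeasure_mfcLawN hp
    (fun t => ((hq t).uniformContinuous i).continuous) μ0 N
  obtain ⟨C, hC⟩ := isCompact_univ.exists_bound_of_continuousOn hr.continuousOn
  replace hC μ : |r μ| ≤ C := hC μ (Set.mem_univ μ)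
  have hrN N : Continuous fun x : Fin N → X => r (emp N x) := hr.comp (continuous_emp N)
  have hCN N i t : |∫ x, r (emp N x) ∂(mfcLawN p (q i) μ0 N t)| ≤ C := by
    have := hprob N i t
    simpa using abs_integral_sub_integral_le (mfcLawN p (q i) μ0 N t) (hrN N)
      (continuous_const (y := 0)) fun x => by simpa using hC (emp N x)
  refine tendstoUniformly_iff_tendsto.2 (tendsto_uniformity_iff_dist_tendsto_zero.2 ?_)
  have hsum := tendsto_tsum_pow_mul_of_bounded (κ := ℕ × ι) (l := atTop ×ˢ ⊤) hγ
    (a := fun k t => r (m k.2 t) - ∫ x, r (emp k.1 x) ∂(mfcLawN p (q k.2) μ0 k.1 t))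
    (C := C + C) (fun k t => (abs_sub _ _).trans (add_le_add (hC _) (hCN _ _ _)))
    fun t => by simpa using (tendsto_integral_emp_sub_mfcLawN hp hq hm0 hm hr t).neg
  refine ((tendsto_zero_iff_abs_tendsto_zero _).1 hsum).congr fun k => ?_
  rw [Real.dist_eq, ← (summable_pow_mul_of_bounded hγ fun t => hC (m k.2 t)).tsum_sub
    (summable_pow_mul_of_bounded hγ (hCN k.1 k.2))]
  simp only [Function.comp_apply, mul_sub]

end NAgent

section Optimality

attribute [local instance] w1PseudoMetricSpace

variable {X U : Type*} [MetricSpace X] [CompactSpace X] [MeasurableSpace X] [BorelSpace X]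
  [MetricSpace U] [CompactSpace U] [MeasurableSpace U] [BorelSpace U]
  {p : X → U → ProbabilityMeasure X → ProbabilityMeasure X}
  (hp : Continuous fun z : X × U × ProbabilityMeasure X => p z.1 z.2.1 z.2.2)

include hp

lemma exists_mem_Hset_bind_eq_meanFieldStep {q : X → ProbabilityMeasure X → ProbabilityMeasure U}
    (hq : Continuous fun z : X × ProbabilityMeasure X => q z.1 z.2) (μ : ProbabilityMeasure X) :
    ∃ h : ProbabilityMeasure (X × U), h ∈ Hset μ ∧
      (h : Measure (X × U)).bind (fun z => (p z.1 z.2 μ : Measure X)) = meanFieldStep p q μ := by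
  have hqμ : Continuous fun x => q x μ := hq.comp (f := fun x => (x, μ)) (by fun_prop)
  have hpμ : Measurable fun z : X × U => (p z.1 z.2 μ : Measure X) :=
    measurable_coe_of_continuous (hp.comp (f := fun z : X × U => (z.1, z.2, μ)) (by fun_prop))
  let κ : Kernel X U := ⟨fun x => q x μ, measurable_coe_of_continuous hqμ⟩
  have : IsMarkovKernel κ := ⟨fun x => (q x μ).2⟩
  refine ⟨⟨(μ : Measure X) ⊗ₘ κ, inferInstance⟩, Measure.fst_compProd _ _, ?_⟩
  ext s hs
  have hagent := measurable_coe_of_continuous (continuous_agentKernel_left hp hq μ)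
  rw [meanFieldStep, coe_mixture μ hagent, Measure.bind_apply hs hagent.aemeasurable,
    ProbabilityMeasure.coe_mk, Measure.bind_apply hs hpμ.aemeasurable,
    Measure.lintegral_compProd (f := fun z => (p z.1 z.2 μ : Measure X) s)
      ((Measure.measurable_coe hs).comp hpμ)]
  refine lintegral_congr fun x => ?_
  have hsection : Measurable fun u => (p x u μ : Measure X) := hpμ.comp measurable_prodMk_left
  rw [coe_agentKernel hp, Measure.bind_apply hs hsection.aemeasurable, Kernel.coe_mk]

lemma exists_mfcTraj_eq {q : ℕ → X → ProbabilityMeasure X → ProbabilityMeasure U}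
    (hq : ∀ t, Continuous fun z : X × ProbabilityMeasure X => q t z.1 z.2)
    {T : ProbabilityMeasure X → ProbabilityMeasure (X × U) → ProbabilityMeasure X}
    (hT : ∀ (μ : ProbabilityMeasure X) (ν : ProbabilityMeasure (X × U)),
      (T μ ν : Measure X) = (ν : Measure (X × U)).bind fun z => (p z.1 z.2 μ : Measure X))
    {μ0 : ProbabilityMeasure X} {m : ℕ → ProbabilityMeasure X} (hm0 : m 0 = μ0)
    (hm : ∀ t, (m (t + 1) : Measure X) = (m t : Measure X).bind fun x =>
      (q t x (m t) : Measure U).bind fun u => (p x u (m t) : Measure X)) :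
    ∃ pol : ℕ → ProbabilityMeasure X → ProbabilityMeasure (X × U),
      (∀ t μ, pol t μ ∈ Hset μ) ∧ mfcTraj T pol μ0 = m := by
  choose pol hmem hbind using fun t => exists_mem_Hset_bind_eq_meanFieldStep hp (hq t)
  refine ⟨pol, hmem, funext fun t => ?_⟩
  induction t with
  | zero => rw [mfcTraj, hm0]
  | succ t ih =>
    rw [mfcTraj, ih]
    refine Subtype.ext ?_
    rw [ProbabilityMeasure.val_eq_to_measure, ProbabilityMeasure.val_eq_to_measure, hT, hbind,
      coe_meanFieldStep hp (hq t), hm]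

end Optimality

section Main

attribute [local instance] w1PseudoMetricSpace

lemma equicontinuous_of_abs_integral_sub_le {X U ι : Type*} [PseudoMetricSpace X] [CompactSpace X]
    [MeasurableSpace X] [OpensMeasurableSpace X] [PseudoMetricSpace U] [CompactSpace U]
    [MeasurableSpace U] [OpensMeasurableSpace U] {L : ℝ}
    {q : ι → X → ProbabilityMeasure X → ProbabilityMeasure U}
    (hq : ∀ i (x x' : X) (μ μ' : ProbabilityMeasure X) (g : U → ℝ), LipschitzWith 1 g →
      |∫ u, g u ∂(q i x μ : Measure U) - ∫ u, g u ∂(q i x' μ' : Measure U)|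
        ≤ L * (dist x x' + W1 μ μ')) :
    Equicontinuous fun i (z : X × ProbabilityMeasure X) => q i z.1 z.2 := fun z => by
  refine Metric.equicontinuousAt_of_continuity_modulus
    (fun z' => L * (dist z.1 z'.1 + dist z.2 z'.2)) ?_ _ (Eventually.of_forall fun z' i =>
      W1_le fun g hg => hq i z.1 z'.1 z.2 z'.2 g hg)
  exact Continuous.tendsto' (by fun_prop) _ _ (by simp)

lemma continuous_of_abs_integral_sub_le {X U : Type*} [PseudoMetricSpace X] [CompactSpace X]
    [MeasurableSpace X] [OpensMeasurableSpace X] [PseudoMetricSpace U] [CompactSpace U]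
    [MeasurableSpace U] [OpensMeasurableSpace U] {L : ℝ}
    {q : X → ProbabilityMeasure X → ProbabilityMeasure U}
    (hq : ∀ (x x' : X) (μ μ' : ProbabilityMeasure X) (g : U → ℝ), LipschitzWith 1 g →
      |∫ u, g u ∂(q x μ : Measure U) - ∫ u, g u ∂(q x' μ' : Measure U)|
        ≤ L * (dist x x' + W1 μ μ')) :
    Continuous fun z : X × ProbabilityMeasure X => q z.1 z.2 :=
  (equicontinuous_of_abs_integral_sub_le (ι := Unit) fun _ => hq).continuous ()

theorem statement12_general {X U : Type*}
    [MetricSpace X] [CompactSpace X] [MeasurableSpace X] [BorelSpace X] [Nonempty X]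
    [MetricSpace U] [CompactSpace U] [MeasurableSpace U] [BorelSpace U]
    {p : X → U → ProbabilityMeasure X → ProbabilityMeasure X}
    (hp : Continuous fun z : X × U × ProbabilityMeasure X => p z.1 z.2.1 z.2.2)
    {r : ProbabilityMeasure X → ℝ} (hr : Continuous r) {γ : ℝ} (hγ : |γ| < 1)
    {Pi : Set (ℕ → X → ProbabilityMeasure X → ProbabilityMeasure U)}
    (hPi : ∀ t, Equicontinuous fun (q : Pi) (z : X × ProbabilityMeasure X) => q.1 t z.1 z.2)
    {μ0 : ProbabilityMeasure X}
    {mf : (ℕ → X → ProbabilityMeasure X → ProbabilityMeasure U) → ℕ → ProbabilityMeasure X}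
    (hmf0 : ∀ q ∈ Pi, mf q 0 = μ0)
    (hmf : ∀ q ∈ Pi, ∀ t : ℕ,
      (mf q (t + 1) : Measure X) = (mf q t : Measure X).bind fun x =>
        (q t x (mf q t) : Measure U).bind fun u => (p x u (mf q t) : Measure X))
    {πstar : ℕ → X → ProbabilityMeasure X → ProbabilityMeasure U} (hπstar : πstar ∈ Pi)
    (hopt : ∀ q ∈ Pi, ∑' t : ℕ, γ ^ t * r (mf q t) ≤ ∑' t : ℕ, γ ^ t * r (mf πstar t)) :
    ∀ ε > (0 : ℝ), ∃ N0 : ℕ, ∀ N ≥ N0, ∀ q ∈ Pi,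
      (∑' t : ℕ, γ ^ t * ∫ x, r (emp N x) ∂(mfcLawN p πstar μ0 N t))
        ≥ (∑' t : ℕ, γ ^ t * ∫ x, r (emp N x) ∂(mfcLawN p q μ0 N t)) - ε := by
  intro ε hε
  have hPi_unif t := CompactSpace.uniformEquicontinuous_of_equicontinuous (hPi t)
  have hstep (q : Pi) t : mf q (t + 1) = meanFieldStep p (q.1 t) (mf q t) :=
    Subtype.ext ((hmf q q.2 t).trans (coe_meanFieldStep hp ((hPi t).continuous q) _).symm)
  have hconv := tendstoUniformly_tsum_mfcLawN hp hPi_unif (fun q => hmf0 q q.2) hstep hr hγ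
  obtain ⟨N0, hN0⟩ := eventually_atTop.1 (Metric.tendstoUniformly_iff.1 hconv _ (half_pos hε))
  refine ⟨N0, fun N hN q hq => ?_⟩
  have hclose_star := abs_lt.1 (hN0 N hN ⟨πstar, hπstar⟩)
  have hclose := abs_lt.1 (hN0 N hN ⟨q, hq⟩)
  linarith [hopt q hq, hclose_star.2, hclose.1]

end Main

/-- approximate optimality of MFC solutions for deterministic MFC. If the
agent-level policy `π*` induced by an optimal deterministic MFC policy (optimal among all MFC
policies `μ ↦ h ∈ ℋ(μ)`) belongs to the equi-Lipschitz class `Π`, then it is `ε(N)`-optimal in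
the `N`-agent system, `J^N(Φ(π*)) ≥ sup_{π ∈ Π} J^N(π) − ε(N)`, with `ε(N) → 0` as `N → ∞`. -/
theorem statement12 {X U : Type*}
    [MetricSpace X] [CompactSpace X] [MeasurableSpace X] [BorelSpace X] [Nonempty X]
    [MetricSpace U] [CompactSpace U] [MeasurableSpace U] [BorelSpace U]
    (p : X → U → ProbabilityMeasure X → ProbabilityMeasure X)
    (hp : Continuous fun z : X × U × ProbabilityMeasure X => p z.1 z.2.1 z.2.2)
    (r : ProbabilityMeasure X → ℝ) (hr : Continuous r)
    (γ : ℝ) (hγ0 : 0 < γ) (hγ1 : γ < 1)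
    (L : ℝ) (hL : 0 < L)
    (Pi : Set (ℕ → X → ProbabilityMeasure X → ProbabilityMeasure U))
    (hPi : ∀ π ∈ Pi, ∀ (t : ℕ) (x x' : X) (μ μ' : ProbabilityMeasure X) (g : U → ℝ),
      LipschitzWith 1 g →
      |∫ u, g u ∂(π t x μ : Measure U) - ∫ u, g u ∂(π t x' μ' : Measure U)|
        ≤ L * (dist x x' + W1 μ μ'))
    (μ0 : ProbabilityMeasure X)
    (T : ProbabilityMeasure X → ProbabilityMeasure (X × U) → ProbabilityMeasure X)
    (hT : ∀ (μ : ProbabilityMeasure X) (ν : ProbabilityMeasure (X × U)),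
      (T μ ν : Measure X) = (ν : Measure (X × U)).bind fun z => (p z.1 z.2 μ : Measure X))
    (mf : (ℕ → X → ProbabilityMeasure X → ProbabilityMeasure U) → ℕ → ProbabilityMeasure X)
    (hmf0 : ∀ q, mf q 0 = μ0)
    (hmf : ∀ q ∈ Pi, ∀ t : ℕ,
      (mf q (t + 1) : Measure X) = (mf q t : Measure X).bind fun x =>
        ((q t x (mf q t) : Measure U)).bind fun u => (p x u (mf q t) : Measure X))
    (πstar : ℕ → X → ProbabilityMeasure X → ProbabilityMeasure U) (hπstar : πstar ∈ Pi)
    (hopt : ∀ pol : ℕ → ProbabilityMeasure X → ProbabilityMeasure (X × U),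
      (∀ t μ, pol t μ ∈ Hset μ) →
      (∑' t : ℕ, γ ^ t * r (mfcTraj T pol μ0 t)) ≤ ∑' t : ℕ, γ ^ t * r (mf πstar t)) :
    ∀ ε > (0 : ℝ), ∃ N0 : ℕ, ∀ N ≥ N0, ∀ q ∈ Pi,
      (∑' t : ℕ, γ ^ t * ∫ x, r (emp N x) ∂(mfcLawN p πstar μ0 N t))
        ≥ (∑' t : ℕ, γ ^ t * ∫ x, r (emp N x) ∂(mfcLawN p q μ0 N t)) - ε := by
  have hequi t := equicontinuous_of_abs_integral_sub_le fun q : Pi => hPi q q.2 t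
  refine statement12_general hp hr (abs_lt.2 ⟨by linarith, hγ1⟩) hequi (fun q _ => hmf0 q) hmf
    hπstar fun q hq => ?_
  obtain ⟨pol, hpol, htraj⟩ := exists_mfcTraj_eq hp
    (fun t => continuous_of_abs_integral_sub_le (hPi q hq t)) hT (hmf0 q) (hmf q hq)
  exact htraj ▸ hopt pol hpol
end
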